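/- Let ε ∈ (0,1], k ∈ {0,1}, ε_k = (k+ε)/2, and let p be a strictly pseudoconvex boundary point of class C^{k+2,ε} of a domain Ω in ℂⁿ. Then there exist a constant C > 0 and a neighborhood U of p such that for every z ∈ Ω ∩ U and every X ∈ ℂⁿ, κ_Ω(z;X) ≤ (1 + C·δ_Ω(z)^{ε_k}) · ( |⟨∂δ_Ω(z),X⟩|²/δ_Ω(z)² + L(z;X)/δ_Ω(z) )^{1/2}. -/

import Mathlib

open Metric MeasureTheory Set
open scoped NNReal ENNReal

noncomputable section

/-- Complex Euclidean `n`-space. -/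
abbrev Cn (n : ℕ) := EuclideanSpace ℂ (Fin n)

variable {n : ℕ}

instance : MeasurableSpace (Cn n) := borel _
instance : BorelSpace (Cn n) := ⟨rfl⟩
instance : InnerProductSpace ℝ (Cn n) := InnerProductSpace.rclikeToReal ℂ _

/-- `δ_Ω(z)`: the Euclidean distance from `z` to the boundary of `Ω`. -/
def bdist (Ω : Set (Cn n)) (z : Cn n) : ℝ := Metric.infDist z (frontier Ω)

/-- The squeezing function `σ_Ω(z)` of a (bounded) domain `Ω`. -/
def squeezing (Ω : Set (Cn n)) (z : Cn n) : ℝ :=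
  sSup {r : ℝ | 0 < r ∧ ∃ f : Cn n → Cn n,
    DifferentiableOn ℂ f Ω ∧ Set.InjOn f Ω ∧ Set.MapsTo f Ω (Metric.ball 0 1) ∧
    f z = 0 ∧ Metric.ball (0 : Cn n) r ⊆ f '' Ω}

/-- The Kobayashi metric `κ_Ω(z;X)`. -/
def kobayashi (Ω : Set (Cn n)) (z X : Cn n) : ℝ :=
  sInf {r : ℝ | ∃ (α : ℂ) (φ : ℂ → Cn n),
    DifferentiableOn ℂ φ (Metric.ball 0 1) ∧ Set.MapsTo φ (Metric.ball 0 1) Ω ∧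
    φ 0 = z ∧ α • deriv φ 0 = X ∧ r = ‖α‖}

/-- The Carathéodory metric `γ_Ω(z;X)`. -/
def caratheodory (Ω : Set (Cn n)) (z X : Cn n) : ℝ :=
  sSup {r : ℝ | ∃ f : Cn n → ℂ,
    DifferentiableOn ℂ f Ω ∧ Set.MapsTo f Ω (Metric.ball 0 1) ∧
    r = ‖fderiv ℂ f z X‖}

/-- `⟨∂ρ(q),X⟩ = Σ_j (∂ρ/∂z_j)(q) X_j`, expressed via the real differential:
`⟨∂ρ(q),X⟩ = (Dρ(q)X - i·Dρ(q)(iX))/2`. -/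
def cderiv (ρ : Cn n → ℝ) (q X : Cn n) : ℂ :=
  (((fderiv ℝ ρ q X : ℝ) : ℂ) - Complex.I * ((fderiv ℝ ρ q (Complex.I • X) : ℝ) : ℂ)) / 2

/-- The Levi form `L_ρ(q;X) = Σ_{j,k} (∂²ρ/∂z_j∂z̄_k)(q) X_j X̄_k`, expressed via the real
second differential: `L_ρ(q;X) = (D²ρ(q)[X,X] + D²ρ(q)[iX,iX])/4`. -/
def leviForm (ρ : Cn n → ℝ) (q X : Cn n) : ℝ :=
  (fderiv ℝ (fun w => fderiv ℝ ρ w X) q X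
    + fderiv ℝ (fun w => fderiv ℝ ρ w (Complex.I • X)) q (Complex.I • X)) / 4

/-- `p` is a strictly pseudoconvex boundary point of `Ω` of class `C^{m,ε}`. -/
def IsStrictPscPtHolder (Ω : Set (Cn n)) (p : Cn n) (m : ℕ) (ε : ℝ) : Prop :=
  p ∈ frontier Ω ∧ ∃ W : Set (Cn n), IsOpen W ∧ p ∈ W ∧ ∃ ρ : Cn n → ℝ,
    ContDiffOn ℝ m ρ W ∧
    (∃ C : ℝ≥0, HolderOnWith C ε.toNNReal (iteratedFDeriv ℝ m ρ) W) ∧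
    Ω ∩ W = {z ∈ W | ρ z < 0} ∧
    (∀ q ∈ frontier Ω ∩ W, fderiv ℝ ρ q ≠ 0) ∧
    (∀ q ∈ frontier Ω ∩ W, ∀ X : Cn n, X ≠ 0 → cderiv ρ q X = 0 → 0 < leviForm ρ q X)

/-- `p` is a strictly pseudoconvex boundary point of `Ω` of class `C²`. -/
def IsStrictPscPtC2 (Ω : Set (Cn n)) (p : Cn n) : Prop :=
  p ∈ frontier Ω ∧ ∃ W : Set (Cn n), IsOpen W ∧ p ∈ W ∧ ∃ ρ : Cn n → ℝ,
    ContDiffOn ℝ 2 ρ W ∧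
    Ω ∩ W = {z ∈ W | ρ z < 0} ∧
    (∀ q ∈ frontier Ω ∩ W, fderiv ℝ ρ q ≠ 0) ∧
    (∀ q ∈ frontier Ω ∩ W, ∀ X : Cn n, X ≠ 0 → cderiv ρ q X = 0 → 0 < leviForm ρ q X)

/-- An open set `D ⊆ ℂⁿ` is pseudoconvex: `u = -log dist(·, Dᶜ)` is plurisubharmonic on `D`. -/
def IsPseudoconvex (D : Set (Cn n)) : Prop :=
  IsOpen D ∧
  UpperSemicontinuousOn (fun z => -Real.log (Metric.infDist z Dᶜ)) D ∧
  ∀ a ∈ D, ∀ w : Cn n, ∀ r : ℝ, 0 < r →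
    (∀ l : ℂ, ‖l‖ ≤ r → a + l • w ∈ D) →
    -Real.log (Metric.infDist a Dᶜ) ≤
      (1 / (2 * Real.pi)) * ∫ θ in (0:ℝ)..(2 * Real.pi),
        -Real.log (Metric.infDist (a + ((r : ℂ) * Complex.exp (θ * Complex.I)) • w) Dᶜ)

/-- `cl(Ω)` admits a Stein neighborhood basis. -/
def HasSteinBasis (Ω : Set (Cn n)) : Prop :=
  ∀ W : Set (Cn n), IsOpen W → closure Ω ⊆ W →
    ∃ U : Set (Cn n), IsPseudoconvex U ∧ closure Ω ⊆ U ∧ U ⊆ W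

/-- The squared `L²`-norm of `f` on `D` (as an extended nonnegative real). -/
def L2normSq (D : Set (Cn n)) (f : Cn n → ℂ) : ℝ≥0∞ := ∫⁻ w in D, (‖f w‖₊ : ℝ≥0∞) ^ 2

/-- `J⁰_D(z) = sup {|f(z)|² : f ∈ L²_h(D), ‖f‖_D ≤ 1}`; equals the Bergman kernel on the
diagonal. -/
def J0 (D : Set (Cn n)) (z : Cn n) : ℝ :=
  sSup {v : ℝ | ∃ f : Cn n → ℂ, DifferentiableOn ℂ f D ∧ L2normSq D f ≤ 1 ∧ v = ‖f z‖ ^ 2}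

/-- `J¹_D(z;X) = sup {|f'(z)X|² : f ∈ L²_h(D), ‖f‖_D ≤ 1, f(z) = 0}`. -/
def J1 (D : Set (Cn n)) (z X : Cn n) : ℝ :=
  sSup {v : ℝ | ∃ f : Cn n → ℂ, DifferentiableOn ℂ f D ∧ L2normSq D f ≤ 1 ∧ f z = 0 ∧
    v = ‖fderiv ℂ f z X‖ ^ 2}

/-- `J²_D(z;X,Y) = sup {|Σ_{j,k} f_{ζ_jζ_k}(z) X_j Y_k|² : f ∈ L²_h(D), ‖f‖_D ≤ 1,
f(z) = 0, f'(z) = 0}`. -/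
def J2 (D : Set (Cn n)) (z X Y : Cn n) : ℝ :=
  sSup {v : ℝ | ∃ f : Cn n → ℂ, DifferentiableOn ℂ f D ∧ L2normSq D f ≤ 1 ∧ f z = 0 ∧
    fderiv ℂ f z = 0 ∧ v = ‖fderiv ℂ (fun w => fderiv ℂ f w Y) z X‖ ^ 2}

/-- The Bergman metric `β_D(z;X) = (J¹_D(z;X)/J⁰_D(z))^{1/2}`. -/
def bergman (D : Set (Cn n)) (z X : Cn n) : ℝ := Real.sqrt (J1 D z X / J0 D z)

/-- The bisectional curvature of the Bergman metric. -/
def bisect (D : Set (Cn n)) (z X Y : Cn n) : ℝ :=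
  2 - J0 D z * J2 D z X Y / (J1 D z X * J1 D z Y)

/-- The holomorphic sectional curvature `s_D(z;X)` of the Bergman metric. -/
def sectCurv (D : Set (Cn n)) (z X : Cn n) : ℝ := bisect D z X X

/-- The Ricci curvature `r_D(z;X)` of the Bergman metric (w.r.t. the standard basis). -/
def ricciCurv (D : Set (Cn n)) (z X : Cn n) : ℝ :=
  ∑ j : Fin n, bisect D z (EuclideanSpace.single j 1) X

/-- The scalar curvature `t_D(z)` of the Bergman metric. -/
def scalarCurv (D : Set (Cn n)) (z : Cn n) : ℝ :=
  ∑ j : Fin n, ricciCurv D z (EuclideanSpace.single j 1)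

/-- `M(z;X) = ( |⟨∂δ_Ω(z),X⟩|²/δ_Ω(z)² + L(z;X)/δ_Ω(z) )^{1/2}`, where `L` is the Levi form
of `-δ_Ω`. -/
def Mfun (Ω : Set (Cn n)) (z X : Cn n) : ℝ :=
  Real.sqrt (‖cderiv (bdist Ω) z X‖ ^ 2 / (bdist Ω z) ^ 2
    + leviForm (fun w => -(bdist Ω w)) z X / bdist Ω z)

/-- The sesquilinear form of the Bergman metric, recovered from `β²` by polarization. -/
def bergForm (D : Set (Cn n)) (z X Y : Cn n) : ℂ :=
  (((J1 D z (X + Y) / J0 D z : ℝ) : ℂ) - ((J1 D z (X - Y) / J0 D z : ℝ) : ℂ)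
    + Complex.I * ((J1 D z (X + Complex.I • Y) / J0 D z : ℝ) : ℂ)
    - Complex.I * ((J1 D z (X - Complex.I • Y) / J0 D z : ℝ) : ℂ)) / 4

/-- The Hermitian matrix `(B_{jk}(z))` of the Bergman metric in the standard coordinates. -/
def bergMat (D : Set (Cn n)) (z : Cn n) : Matrix (Fin n) (Fin n) ℂ :=
  fun j k => bergForm D z (EuclideanSpace.single j 1) (EuclideanSpace.single k 1)

/-- The canonical Bergman invariant `J_D(z) = Δ_D(z)/K_D(z)`. -/
def canonInvariant (D : Set (Cn n)) (z : Cn n) : ℂ :=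
  (bergMat D z).det / ((J0 D z : ℝ) : ℂ)

section MyPart
open Filter Topology

/-- local `C^{j,ε}` regularity near `a` -/
def HC {E : Type} [NormedAddCommGroup E] [NormedSpace ℝ E] (ε : ℝ) (a : E) :
    (j : ℕ) → (F : Type) → [NormedAddCommGroup F] → [NormedSpace ℝ F] → (E → F) → Prop
  | 0, _, _, _, f => ∃ C : ℝ, 0 ≤ C ∧ ∃ U ∈ 𝓝 a, ∀ x ∈ U, ∀ y ∈ U, ‖f x - f y‖ ≤ C * ‖x - y‖ ^ ε
  | (j+1), F, _, _, f => (∀ᶠ x in 𝓝 a, DifferentiableAt ℝ f x) ∧ HC ε a j (E →L[ℝ] F) (fderiv ℝ f)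

section HCsec
variable {E F G K : Type} [NormedAddCommGroup E] [NormedSpace ℝ E]
  [NormedAddCommGroup F] [NormedSpace ℝ F] [NormedAddCommGroup G] [NormedSpace ℝ G]
  [NormedAddCommGroup K] [NormedSpace ℝ K] {ε : ℝ} {a : E}

theorem HC.congr {j : ℕ} : ∀ {F : Type} [NormedAddCommGroup F] [NormedSpace ℝ F] {f g : E → F},
    HC ε a j F f → f =ᶠ[𝓝 a] g → HC ε a j F g := by
  induction j with
  | zero =>
    intro F _ _ f g hf h
    obtain ⟨C, hC, U, hU, H⟩ := hf
    refine ⟨C, hC, U ∩ {x | f x = g x}, inter_mem hU h, ?_⟩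
    rintro x ⟨hx, hx'⟩ y ⟨hy, hy'⟩
    have := H x hx y hy
    simp only [mem_ofPred_eq] at hx' hy'
    rwa [hx', hy'] at this
  | succ j ih =>
    intro F _ _ f g hf h
    refine ⟨?_, ih hf.2 h.fderiv⟩
    filter_upwards [hf.1, h.eventuallyEq_nhds] with x hx hx'
    exact hx.congr_of_eventuallyEq hx'.symm

/-- locally Lipschitz near `a` -/
def LL (a : E) (f : E → F) : Prop :=
  ∃ C : ℝ, 0 ≤ C ∧ ∃ U ∈ 𝓝 a, ∀ x ∈ U, ∀ y ∈ U, ‖f x - f y‖ ≤ C * ‖x - y‖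

theorem LL.continuousAt {f : E → F} (h : LL a f) : ContinuousAt f a := by
  obtain ⟨C, hC, U, hU, H⟩ := h
  rw [ContinuousAt, tendsto_iff_norm_sub_tendsto_zero]
  have : Tendsto (fun x : E => C * ‖x - a‖) (𝓝 a) (𝓝 0) := by
    have : ContinuousAt (fun x : E => C * ‖x - a‖) a := by fun_prop
    simpa [ContinuousAt] using this
  refine squeeze_zero' (Eventually.of_forall fun x => norm_nonneg _) ?_ this
  filter_upwards [hU] with x hx using H x hx a (mem_of_mem_nhds hU)

theorem LL.hc {f : E → F} (h : LL a f) (h1 : ε ≤ 1) (h0 : 0 < ε): HC ε a 0 F f := by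
  obtain ⟨C, hC, U, hU, H⟩ := h
  refine ⟨C, hC, U ∩ ball a (1/2), inter_mem hU (ball_mem_nhds _ (by norm_num)), ?_⟩
  rintro x ⟨hx, hx'⟩ y ⟨hy, hy'⟩
  refine (H x hx y hy).trans ?_
  gcongr
  have : ‖x - y‖ ≤ 1 := by
    rw [← dist_eq_norm]
    have := dist_triangle_right x y a
    simp only [mem_ball] at hx' hy'
    linarith
  rcases (norm_nonneg (x - y)).eq_or_lt with h | h
  · rw [← h, Real.zero_rpow h0.ne']
  · calc ‖x - y‖ = ‖x - y‖ ^ (1:ℝ) := (Real.rpow_one _).symm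
      _ ≤ _ := Real.rpow_le_rpow_of_exponent_ge h this h1

theorem HC.continuousAt_zero {f : E → F} (h : HC ε a 0 F f) (h0 : 0 < ε) : ContinuousAt f a := by
  obtain ⟨C, hC, U, hU, H⟩ := h
  rw [ContinuousAt, tendsto_iff_norm_sub_tendsto_zero]
  have : Tendsto (fun x : E => C * ‖x - a‖ ^ ε) (𝓝 a) (𝓝 0) := by
    have : ContinuousAt (fun x : E => C * ‖x - a‖ ^ ε) a := by
      refine ContinuousAt.mul continuousAt_const (ContinuousAt.rpow_const (by fun_prop) (Or.inr h0.le))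
    simpa [ContinuousAt, Real.zero_rpow h0.ne'] using this
  refine squeeze_zero' (Eventually.of_forall fun x => norm_nonneg _) ?_ this
  filter_upwards [hU] with x hx using H x hx a (mem_of_mem_nhds hU)

theorem LL_of_fderiv {f : E → F} (h1 : ∀ᶠ x in 𝓝 a, DifferentiableAt ℝ f x)
    (h2 : ContinuousAt (fderiv ℝ f) a) : LL a f := by
  have h3 : ∀ᶠ x in 𝓝 a, ‖fderiv ℝ f x‖ < ‖fderiv ℝ f a‖ + 1 :=
    h2.norm.eventually_lt continuousAt_const (by simp)
  obtain ⟨r, hr, H⟩ := Metric.eventually_nhds_iff_ball.1 (h1.and h3)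
  refine ⟨‖fderiv ℝ f a‖ + 1, by positivity, ball a r, ball_mem_nhds _ hr, fun x hx y hy => ?_⟩
  exact (convex_ball a r).norm_image_sub_le_of_norm_fderiv_le (fun z hz => (H z hz).1)
    (fun z hz => (H z hz).2.le) hy hx

theorem HC.continuousAt (h0 : 0 < ε) {j : ℕ} : ∀ {F : Type} [NormedAddCommGroup F] [NormedSpace ℝ F] {f : E → F},
    HC ε a j F f → ContinuousAt f a := by
  induction j with
  | zero => intro F _ _ f h; exact h.continuousAt_zero h0
  | succ j ih => intro F _ _ f h; exact (LL_of_fderiv h.1 (ih h.2)).continuousAt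

theorem HC.toLL (h0 : 0 < ε) {j : ℕ} {f : E → F} (h : HC ε a (j+1) F f) : LL a f :=
  LL_of_fderiv h.1 (h.2.continuousAt h0)

theorem HC.pred (h0 : 0 < ε) (h1 : ε ≤ 1) {j : ℕ} : ∀ {F : Type} [NormedAddCommGroup F] [NormedSpace ℝ F] {f : E → F},
    HC ε a (j+1) F f → HC ε a j F f := by
  induction j with
  | zero => intro F _ _ f h; exact (h.toLL h0).hc h1 h0
  | succ j ih => intro F _ _ f h; exact ⟨h.1, ih h.2⟩

theorem HC.of_contDiffAt (h0 : 0 < ε) (h1 : ε ≤ 1) {j : ℕ} : ∀ {F : Type} [NormedAddCommGroup F] [NormedSpace ℝ F] {f : E → F},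
    ContDiffAt ℝ (j+1 : ℕ) f a → HC ε a j F f := by
  induction j with
  | zero =>
    intro F _ _ f h
    refine (LL_of_fderiv ?_ ?_).hc h1 h0
    · exact (h.eventually (by simp)).mono fun x hx => hx.differentiableAt (by simp)
    · exact (h.fderiv_right (m := 0) (by simp)).continuousAt
  | succ j ih =>
    intro F _ _ f h
    refine ⟨(h.eventually (by simp)).mono fun x hx => hx.differentiableAt (by simp), ih ?_⟩
    exact h.fderiv_right (by norm_cast)

theorem HC.add {j : ℕ} : ∀ {F : Type} [NormedAddCommGroup F] [NormedSpace ℝ F] {f g : E → F},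
    HC ε a j F f → HC ε a j F g → HC ε a j F (fun x => f x + g x) := by
  induction j with
  | zero =>
    intro F _ _ f g hf hg
    obtain ⟨C, hC, U, hU, H⟩ := hf
    obtain ⟨C', hC', U', hU', H'⟩ := hg
    refine ⟨C + C', by positivity, U ∩ U', inter_mem hU hU', ?_⟩
    rintro x ⟨hx, hx'⟩ y ⟨hy, hy'⟩
    calc ‖f x + g x - (f y + g y)‖ = ‖(f x - f y) + (g x - g y)‖ := by congr 1; abel
      _ ≤ _ := norm_add_le _ _
      _ ≤ _ := by rw [add_mul]; exact add_le_add (H x hx y hy) (H' x hx' y hy')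
  | succ j ih =>
    intro F _ _ f g hf hg
    refine ⟨by filter_upwards [hf.1, hg.1] with x h1 h2 using h1.add h2, (ih hf.2 hg.2).congr ?_⟩
    filter_upwards [hf.1, hg.1] with x h1 h2
    exact (fderiv_fun_add h1 h2).symm

theorem HC.clm {j : ℕ} : ∀ {F G : Type} [NormedAddCommGroup F] [NormedSpace ℝ F]
    [NormedAddCommGroup G] [NormedSpace ℝ G] {f : E → F} (L : F →L[ℝ] G),
    HC ε a j F f → HC ε a j G (fun x => L (f x)) := by
  induction j with
  | zero =>
    intro F G _ _ _ _ f L hf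
    obtain ⟨C, hC, U, hU, H⟩ := hf
    refine ⟨‖L‖ * C, by positivity, U, hU, fun x hx y hy => ?_⟩
    rw [← map_sub, mul_assoc]
    exact (L.le_opNorm _).trans (by gcongr; exact H x hx y hy)
  | succ j ih =>
    intro F G _ _ _ _ f L hf
    refine ⟨by filter_upwards [hf.1] with x h1 using L.differentiableAt.comp x h1,
      (ih (ContinuousLinearMap.compL ℝ E F G L) hf.2).congr ?_⟩
    filter_upwards [hf.1] with x h1
    exact (L.hasFDerivAt.comp x h1.hasFDerivAt).fderiv.symm

theorem HC.bilin (h0 : 0 < ε) (h1 : ε ≤ 1) {j : ℕ} : ∀ {F G K : Type} [NormedAddCommGroup F] [NormedSpace ℝ F]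
    [NormedAddCommGroup G] [NormedSpace ℝ G] [NormedAddCommGroup K] [NormedSpace ℝ K]
    {f : E → F} {g : E → G} (B : F →L[ℝ] G →L[ℝ] K),
    HC ε a j F f → HC ε a j G g → HC ε a j K (fun x => B (f x) (g x)) := by
  induction j with
  | zero =>
    intro F G K _ _ _ _ _ _ f g B hf hg
    have cf := hf.continuousAt h0
    have cg := hg.continuousAt h0
    obtain ⟨C, hC, U, hU, H⟩ := hf
    obtain ⟨C', hC', U', hU', H'⟩ := hg
    have bf : ∀ᶠ x in 𝓝 a, ‖f x‖ < ‖f a‖ + 1 := cf.norm.eventually_lt continuousAt_const (by simp)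
    have bg : ∀ᶠ x in 𝓝 a, ‖g x‖ < ‖g a‖ + 1 := cg.norm.eventually_lt continuousAt_const (by simp)
    refine ⟨‖B‖ * (C * (‖g a‖ + 1) + (‖f a‖ + 1) * C'), by positivity, _,
      inter_mem (inter_mem hU hU') (inter_mem bf bg), ?_⟩
    rintro x ⟨⟨hx, hx'⟩, hx1, hx2⟩ y ⟨⟨hy, hy'⟩, hy1, hy2⟩
    simp only [mem_ofPred_eq] at hx1 hx2 hy1 hy2
    have e : B (f x) (g x) - B (f y) (g y) = B (f x - f y) (g x) + B (f y) (g x - g y) := by simp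
    rw [e]
    refine (norm_add_le _ _).trans ?_
    have e1 := B.le_opNorm₂ (f x - f y) (g x)
    have e2 := B.le_opNorm₂ (f y) (g x - g y)
    have e3 := H x hx y hy
    have e4 := H' x hx' y hy'
    calc _ ≤ ‖B‖ * (C * ‖x - y‖ ^ ε) * (‖g a‖ + 1) + ‖B‖ * (‖f a‖ + 1) * (C' * ‖x - y‖ ^ ε) := by
            refine add_le_add (e1.trans ?_) (e2.trans ?_) <;> gcongr
      _ = _ := by ring
  | succ j ih =>
    intro F G K _ _ _ _ _ _ f g B hf hg
    have hd : ∀ᶠ x in 𝓝 a, HasFDerivAt (fun x => B (f x) (g x))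
        ((ContinuousLinearMap.compL ℝ E G K (B (f x))) (fderiv ℝ g x) +
         (ContinuousLinearMap.compL ℝ E F K (B.flip (g x))) (fderiv ℝ f x)) x := by
      filter_upwards [hf.1, hg.1] with x h1 h2
      convert B.hasFDerivAt_of_bilinear h1.hasFDerivAt h2.hasFDerivAt using 1
      ext v; simp
    refine ⟨hd.mono fun x hx => hx.differentiableAt, ?_⟩
    have A1 := ih ((ContinuousLinearMap.compL ℝ E G K).comp B) (hf.pred h0 h1) hg.2
    have A2 := ih ((ContinuousLinearMap.compL ℝ E F K).comp B.flip) (hg.pred h0 h1) hf.2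
    refine (A1.add A2).congr (hd.mono fun x hx => ?_)
    exact hx.fderiv.symm

/-- outer function smooth -/
theorem HC.smooth_comp (h0 : 0 < ε) (h1 : ε ≤ 1) {j : ℕ} : ∀ {F G : Type} [NormedAddCommGroup F] [NormedSpace ℝ F]
    [NormedAddCommGroup G] [NormedSpace ℝ G] {f : E → F} {g : F → G},
    ContDiffAt ℝ (j + 1 : ℕ) g (f a) → HC ε a j F f → HC ε a j G (fun x => g (f x)) := by
  induction j with
  | zero =>
    intro F G _ _ _ _ f g hg hf
    have cf := hf.continuousAt h0
    have : LL (f a) g := LL_of_fderiv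
      ((hg.eventually (by simp)).mono fun x hx => hx.differentiableAt (by simp))
      (hg.fderiv_right (m := 0) (by simp)).continuousAt
    obtain ⟨C', hC', U', hU', H'⟩ := this
    obtain ⟨C, hC, U, hU, H⟩ := hf
    refine ⟨C' * C, by positivity, U ∩ f ⁻¹' U', inter_mem hU (cf hU'), ?_⟩
    rintro x ⟨hx, hx'⟩ y ⟨hy, hy'⟩
    refine (H' _ hx' _ hy').trans ?_
    rw [mul_assoc]
    gcongr
    exact H x hx y hy
  | succ j ih =>
    intro F G _ _ _ _ f g hg hf
    have cf := hf.continuousAt h0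
    have dg : ∀ᶠ x in 𝓝 a, DifferentiableAt ℝ g (f x) :=
      cf.eventually ((hg.eventually (by simp)).mono fun x hx => hx.differentiableAt (by simp))
    have A := HC.bilin h0 h1 (ContinuousLinearMap.compL ℝ E F G)
      (ih (g := fderiv ℝ g) (hg.fderiv_right (by norm_cast)) (hf.pred h0 h1)) hf.2
    refine ⟨by filter_upwards [dg, hf.1] with x h1 h2 using h1.comp x h2, A.congr ?_⟩
    filter_upwards [dg, hf.1] with x h1 h2
    exact (h1.hasFDerivAt.comp x h2.hasFDerivAt).fderiv.symm

/-- inner function Lipschitz -/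
theorem HC.comp (h0 : 0 < ε) (h1 : ε ≤ 1) {j : ℕ} : ∀ {G : Type} 
    [NormedAddCommGroup G] [NormedSpace ℝ G] {f : E → F} {g : F → G},
    HC ε (f a) j G g → HC ε a j F f → LL a f → HC ε a j G (fun x => g (f x)) := by
  induction j with
  | zero =>
    intro G _ _ f g hg hf hl
    have cf := hf.continuousAt h0
    obtain ⟨C', hC', U', hU', H'⟩ := hg
    obtain ⟨C, hC, U, hU, H⟩ := hl
    refine ⟨C' * C ^ ε, by positivity, U ∩ f ⁻¹' U', inter_mem hU (cf hU'), ?_⟩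
    rintro x ⟨hx, hx'⟩ y ⟨hy, hy'⟩
    refine (H' _ hx' _ hy').trans ?_
    rw [mul_assoc, ← Real.mul_rpow hC (norm_nonneg _)]
    gcongr
    exact H x hx y hy
  | succ j ih =>
    intro G _ _ f g hg hf hl
    have cf := hf.continuousAt h0
    have dg : ∀ᶠ x in 𝓝 a, DifferentiableAt ℝ g (f x) := cf.eventually hg.1
    have A := HC.bilin h0 h1 (ContinuousLinearMap.compL ℝ E F G)
      (ih (g := fderiv ℝ g) hg.2 (hf.pred h0 h1) hl) hf.2
    refine ⟨by filter_upwards [dg, hf.1] with x h1 h2 using h1.comp x h2, A.congr ?_⟩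
    filter_upwards [dg, hf.1] with x h1 h2
    exact (h1.hasFDerivAt.comp x h2.hasFDerivAt).fderiv.symm

theorem HC.prodMk {j : ℕ} {f : E → F} {g : E → G} (hf : HC ε a j F f) (hg : HC ε a j G g) :
    HC ε a j (F × G) (fun x => (f x, g x)) := by
  have := (hf.clm (ContinuousLinearMap.inl ℝ F G)).add (hg.clm (ContinuousLinearMap.inr ℝ F G))
  simpa using this

theorem HC.of_iteratedFDeriv (h0 : 0 < ε) {j : ℕ} : ∀ {F : Type} [NormedAddCommGroup F] [NormedSpace ℝ F]
    {f : E → F} {W : Set E} (_ : IsOpen W) (_ : a ∈ W) (_ : ContDiffOn ℝ j f W) {C : ℝ≥0}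
    (_ : HolderOnWith C ε.toNNReal (iteratedFDeriv ℝ j f) W), HC ε a j F f := by
  induction j with
  | zero =>
    intro F _ _ f W hW ha hf C hC
    refine ⟨C, C.2, W, hW.mem_nhds ha, fun x hx y hy => ?_⟩
    have := hC.dist_le hx hy
    rw [iteratedFDeriv_zero_eq_comp] at this
    rw [Function.comp_apply, Function.comp_apply, LinearIsometryEquiv.dist_map, dist_eq_norm, dist_eq_norm, Real.coe_toNNReal _ h0.le] at this
    exact this
  | succ j ih =>
    intro F _ _ f W hW ha hf C hC
    refine ⟨?_, ih hW ha (C := C) ?_ ?_⟩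
    · filter_upwards [hW.mem_nhds ha] with x hx
      exact (hf.contDiffAt (hW.mem_nhds hx)).differentiableAt (by simp)
    · exact (hf.fderiv_of_isOpen hW (by norm_cast))
    · intro x hx y hy
      have := hC x hx y hy
      simpa [iteratedFDeriv_succ_eq_comp_right] using this

theorem HC.contDiffAt (h0 : 0 < ε) {j : ℕ} : ∀ {F : Type} [NormedAddCommGroup F] [NormedSpace ℝ F] {f : E → F},
    HC ε a j F f → ContDiffAt ℝ j f a := by
  induction j with
  | zero =>
    intro F _ _ f h
    obtain ⟨C, hC, U, hU, H⟩ := h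
    rw [Nat.cast_zero, contDiffAt_zero]
    refine ⟨interior U, interior_mem_nhds.2 hU, fun x hx => ContinuousAt.continuousWithinAt ?_⟩
    exact HC.continuousAt_zero (ε := ε) ⟨C, hC, U, mem_interior_iff_mem_nhds.1 hx, H⟩ h0
  | succ j ih =>
    intro F _ _ f h
    have := ih h.2
    rw [Nat.cast_succ, contDiffAt_succ_iff_hasFDerivAt]
    exact ⟨fderiv ℝ f, ⟨_, h.1, fun x hx => DifferentiableAt.hasFDerivAt hx⟩, this⟩

theorem HC.localInverse (h0 : 0 < ε) (h1 : ε ≤ 1) {j : ℕ} [CompleteSpace E] {f : E → F} {g : F → E}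
    (hf : HC ε a (j+1) F f) (e : E ≃L[ℝ] F) (he : fderiv ℝ f a = e) (hga : g (f a) = a)
    (hg : ContDiffAt ℝ 1 g (f a)) (hr : ∀ᶠ y in 𝓝 (f a), f (g y) = y) :
    HC ε (f a) (j+1) E g := by
  have gc : ContinuousAt g (f a) := hg.continuousAt
  have gd : ∀ᶠ y in 𝓝 (f a), DifferentiableAt ℝ g y :=
    (hg.eventually (by simp)).mono fun x hx => hx.differentiableAt (by simp)
  have cd : ContinuousAt (fderiv ℝ f) a := hf.2.continuousAt h0
  have inv : ∀ᶠ x in 𝓝 a, ∃ e' : E ≃L[ℝ] F, (e' : E →L[ℝ] F) = fderiv ℝ f x := by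
    have := e.nhds
    rw [← he] at this
    exact cd.eventually this
  have gt : Tendsto g (𝓝 (f a)) (𝓝 a) := by simpa [ContinuousAt, hga] using gc
  have key : ∀ᶠ y in 𝓝 (f a), fderiv ℝ g y = (fderiv ℝ f (g y)).inverse := by
    filter_upwards [gd, gt.eventually inv, gt.eventually hf.1, hr.eventually_nhds] with y h1 h2 h3 h4
    obtain ⟨e', he'⟩ := h2
    have c : HasFDerivAt (fun y => f (g y)) ((fderiv ℝ f (g y)).comp (fderiv ℝ g y)) y :=
      h3.hasFDerivAt.comp y h1.hasFDerivAt
    have c' : HasFDerivAt (fun y => f (g y)) (ContinuousLinearMap.id ℝ F) y :=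
      (hasFDerivAt_id y).congr_of_eventuallyEq h4
    have c'' := c.unique c'
    rw [← he'] at c'' ⊢
    rw [ContinuousLinearMap.inverse_equiv]
    ext v
    have := congrArg (fun L => L v) c''
    simp only [ContinuousLinearMap.comp_apply] at this
    apply e'.injective
    simpa using this
  have hl : LL (f a) g := LL_of_fderiv gd (hg.fderiv_right (m := 0) (by simp)).continuousAt
  have main : ∀ i ≤ j, HC ε (f a) i E g → HC ε (f a) i (F →L[ℝ] E) (fderiv ℝ g) := by
    intro i hi hgi
    have hfi : ∀ i' ≤ j, HC ε a i' (E →L[ℝ] F) (fderiv ℝ f) := by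
      intro i' hi'
      induction hi' using Nat.decreasingInduction with
      | of_succ n hn ih => exact ih.pred h0 h1
      | self => exact hf.2
    have A := HC.comp (f := g) (g := fderiv ℝ f) (a := f a) h0 h1 (by rw [hga]; exact hfi i hi) hgi hl
    have B := HC.smooth_comp h0 h1 (f := fun y => fderiv ℝ f (g y)) (g := ContinuousLinearMap.inverse)
      (by rw [hga, he]; exact contDiffAt_map_inverse e) A
    exact B.congr (key.mono fun y hy => hy.symm)
  have : ∀ i ≤ j + 1, HC ε (f a) i E g := by
    intro i
    induction i with
    | zero => intro _; exact hl.hc h1 h0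
    | succ i ih => intro hi; exact ⟨gd, main i (by omega) (ih (by omega))⟩
  exact this _ le_rfl

end HCsec

section SDsec
variable {E : Type} [NormedAddCommGroup E] [InnerProductSpace ℝ E] [FiniteDimensional ℝ E]

/-- gradient -/
def grd (ρ : E → ℝ) (q : E) : E := (InnerProductSpace.toDual ℝ E).symm (fderiv ℝ ρ q)

theorem inner_grd (ρ : E → ℝ) (q v : E) : inner ℝ (grd ρ q) v = fderiv ℝ ρ q v := by
  simp [grd]

/-- unit normal -/
def unm (ρ : E → ℝ) (q : E) : E := ‖grd ρ q‖⁻¹ • grd ρ q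

theorem norm_unm {ρ : E → ℝ} {q : E} (h : grd ρ q ≠ 0) : ‖unm ρ q‖ = 1 := by
  rw [unm, norm_smul, norm_inv, norm_norm, inv_mul_cancel₀ (norm_ne_zero_iff.2 h)]

theorem HC_grd {ε : ℝ} {p : E} {j : ℕ} {ρ : E → ℝ} (h : HC ε p (j+2) ℝ ρ) : HC ε p (j+1) E (grd ρ) :=
  HC.clm (F := E →L[ℝ] ℝ) (⟨⟨⟨(InnerProductSpace.toDual ℝ E).symm, fun x y => by simp⟩, fun c x => by simp⟩,
    (InnerProductSpace.toDual ℝ E).symm.continuous⟩ : (E →L[ℝ] ℝ) →L[ℝ] E) h.2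

theorem HC_unm {ε : ℝ} (h0 : 0 < ε) (h1 : ε ≤ 1) {p : E} {j : ℕ} {ρ : E → ℝ} (h : HC ε p (j+2) ℝ ρ)
    (hg : grd ρ p ≠ 0) : HC ε p (j+1) E (unm ρ) := by
  refine HC.smooth_comp (g := fun v : E => ‖v‖⁻¹ • v) h0 h1 ?_ (HC_grd h)
  exact ((contDiffAt_norm ℝ hg).inv (norm_ne_zero_iff.2 hg)).smul contDiffAt_id

/-- the normal coordinates map -/
def Gm (ρ : E → ℝ) (x : E × ℝ) : E × ℝ := (x.1 - x.2 • unm ρ x.1, ρ x.1)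

theorem HC_Gm {ε : ℝ} (h0 : 0 < ε) (h1 : ε ≤ 1) {p : E} {j : ℕ} {ρ : E → ℝ} (h : HC ε p (j+2) ℝ ρ)
    (hg : grd ρ p ≠ 0) : HC ε (p, (0:ℝ)) (j+1) (E × ℝ) (Gm ρ) := by
  have f1 : HC ε (p, (0:ℝ)) (j+1) E (fun x : E × ℝ => x.1) :=
    HC.of_contDiffAt h0 h1 contDiffAt_fst
  have f2 : HC ε (p, (0:ℝ)) (j+1) ℝ (fun x : E × ℝ => x.2) :=
    HC.of_contDiffAt h0 h1 contDiffAt_snd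
  have l1 := f1.toLL h0
  have u1 : HC ε (p, (0:ℝ)) (j+1) E (fun x : E × ℝ => unm ρ x.1) :=
    HC.comp (f := fun x : E × ℝ => x.1) (g := unm ρ) h0 h1 (HC_unm h0 h1 h hg) f1 l1
  have r1 : HC ε (p, (0:ℝ)) (j+1) ℝ (fun x : E × ℝ => ρ x.1) :=
    HC.comp (f := fun x : E × ℝ => x.1) (g := ρ) h0 h1 (h.pred h0 h1) f1 l1
  have s1 := (HC.bilin h0 h1 (ContinuousLinearMap.lsmul ℝ ℝ) f2 u1).clm (-ContinuousLinearMap.id ℝ E)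
  have := (f1.add s1).prodMk r1
  refine this.congr (Eventually.of_forall fun x => ?_)
  simp [Gm, sub_eq_add_neg]

theorem Gm_deriv {ε : ℝ} (h0 : 0 < ε) (h1 : ε ≤ 1) {p : E} {j : ℕ} {ρ : E → ℝ} (h : HC ε p (j+2) ℝ ρ)
    (hg : grd ρ p ≠ 0) : ∃ e : (E × ℝ) ≃L[ℝ] (E × ℝ), HasFDerivAt (Gm ρ) (e : E × ℝ →L[ℝ] E × ℝ) (p, 0) := by
  have du : DifferentiableAt ℝ (unm ρ) p := (HC_unm h0 h1 h hg).1.self_of_nhds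
  have dr : DifferentiableAt ℝ ρ p := h.1.self_of_nhds
  have A1 : HasFDerivAt (fun x : E × ℝ => x.1) (ContinuousLinearMap.fst ℝ E ℝ) (p, (0:ℝ)) := hasFDerivAt_fst
  have A2 : HasFDerivAt (fun x : E × ℝ => x.2) (ContinuousLinearMap.snd ℝ E ℝ) (p, (0:ℝ)) := hasFDerivAt_snd
  have A3 : HasFDerivAt (fun x : E × ℝ => unm ρ x.1) ((fderiv ℝ (unm ρ) p).comp (ContinuousLinearMap.fst ℝ E ℝ)) (p, (0:ℝ)) :=
    HasFDerivAt.comp (f := fun x : E × ℝ => x.1) (p, (0:ℝ)) du.hasFDerivAt A1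
  have A4 : HasFDerivAt (fun x : E × ℝ => ρ x.1) ((fderiv ℝ ρ p).comp (ContinuousLinearMap.fst ℝ E ℝ)) (p, (0:ℝ)) :=
    HasFDerivAt.comp (f := fun x : E × ℝ => x.1) (p, (0:ℝ)) dr.hasFDerivAt A1
  have A := (A1.sub (A2.smul A3)).prodMk A4
  set L := ((ContinuousLinearMap.fst ℝ E ℝ - ((p, (0:ℝ)).2 • (fderiv ℝ (unm ρ) p).comp (ContinuousLinearMap.fst ℝ E ℝ) + (ContinuousLinearMap.snd ℝ E ℝ).smulRight (unm ρ (p, (0:ℝ)).1))).prod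
    ((fderiv ℝ ρ p).comp (ContinuousLinearMap.fst ℝ E ℝ))) with hL
  have inj : Function.Injective (L : E × ℝ →ₗ[ℝ] E × ℝ) := by
    rw [← LinearMap.ker_eq_bot, LinearMap.ker_eq_bot']
    rintro ⟨v, s⟩ hv
    simp [hL, Prod.ext_iff] at hv
    obtain ⟨hv1, hv2⟩ := hv
    have e1 : v = s • unm ρ p := sub_eq_zero.1 hv1
    have hn : ‖grd ρ p‖ ≠ 0 := norm_ne_zero_iff.2 hg
    have : s = 0 := by
      rw [e1, ← inner_grd, unm, inner_smul_right, inner_smul_right, real_inner_self_eq_norm_sq] at hv2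
      field_simp at hv2
      simpa [hn] using hv2
    simp [e1, this]
  refine ⟨(LinearEquiv.ofInjectiveEndo (L : E × ℝ →ₗ[ℝ] E × ℝ) inj).toContinuousLinearEquiv, ?_⟩
  have e1 : (((LinearEquiv.ofInjectiveEndo (L : E × ℝ →ₗ[ℝ] E × ℝ) inj).toContinuousLinearEquiv : (E × ℝ) ≃L[ℝ] (E × ℝ)) :
      E × ℝ →L[ℝ] E × ℝ) = L := by
    apply ContinuousLinearMap.ext
    intro x
    rfl
  rw [e1]
  exact A

end SDsec

section SDsec2
variable {E : Type} [NormedAddCommGroup E] [InnerProductSpace ℝ E] [FiniteDimensional ℝ E]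

theorem SDa {ε : ℝ} (h0 : 0 < ε) (h1 : ε ≤ 1) {p : E} {j : ℕ} {ρ : E → ℝ} (h : HC ε p (j+2) ℝ ρ)
    (hg : grd ρ p ≠ 0) (hp : ρ p = 0) : ∃ (Q : E → E) (t : E → ℝ), HC ε p (j+1) E Q ∧ HC ε p (j+1) ℝ t ∧
      Q p = p ∧ t p = 0 ∧ (∀ᶠ z in 𝓝 p, Q z - t z • unm ρ (Q z) = z ∧ ρ (Q z) = 0) ∧
      (∀ᶠ x in 𝓝 ((p, 0) : E × ℝ), ∀ z, Gm ρ x = (z, 0) → Q z = x.1 ∧ t z = x.2) := by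
  obtain ⟨e, he⟩ := Gm_deriv h0 h1 h hg
  have hG := HC_Gm h0 h1 h hg
  have hc : ContDiffAt ℝ 1 (Gm ρ) (p, (0:ℝ)) := (hG.contDiffAt h0).of_le (by norm_cast; omega)
  have hs := hc.hasStrictFDerivAt' he one_ne_zero
  have hGp : Gm ρ (p, (0:ℝ)) = (p, 0) := by simp [Gm, hp]
  set g := hc.localInverse he one_ne_zero with hgdef
  have hl : ∀ᶠ x in 𝓝 ((p, 0) : E × ℝ), g (Gm ρ x) = x := hs.eventually_left_inverse
  have hr : ∀ᶠ y in 𝓝 (Gm ρ (p, (0:ℝ))), Gm ρ (g y) = y := hs.eventually_right_inverse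
  have hgH := HC.localInverse h0 h1 hG e he.fderiv (hl.self_of_nhds) (hc.to_localInverse he one_ne_zero) hr
  rw [hGp] at hgH hr
  have hi : HC ε p (j+1) (E × ℝ) (fun z : E => (z, (0:ℝ))) :=
    HC.of_contDiffAt h0 h1 (contDiffAt_id.prodMk contDiffAt_const)
  have hgz : HC ε p (j+1) (E × ℝ) (fun z : E => g (z, (0:ℝ))) :=
    HC.comp (f := fun z : E => (z, (0:ℝ))) (g := g) h0 h1 hgH hi (hi.toLL h0)
  have hgp : g (p, 0) = (p, 0) := by
    have := hl.self_of_nhds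
    rwa [hGp] at this
  refine ⟨fun z => (g (z, 0)).1, fun z => (g (z, 0)).2, hgz.clm (ContinuousLinearMap.fst ℝ E ℝ),
    hgz.clm (ContinuousLinearMap.snd ℝ E ℝ), by simp [hgp], by simp [hgp], ?_, ?_⟩
  · have : Tendsto (fun z : E => (z, (0:ℝ))) (𝓝 p) (𝓝 (p, 0)) :=
      (continuous_id.prodMk continuous_const).continuousAt
    filter_upwards [this.eventually hr] with z hz
    simp only [Gm, Prod.ext_iff] at hz
    exact hz
  · filter_upwards [hl] with x hx z hz
    rw [hz] at hx
    simp [hx]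

/-- derivative of `t` -/
theorem SDb {ε : ℝ} (h0 : 0 < ε) (h1 : ε ≤ 1) {p : E} {j : ℕ} {ρ : E → ℝ} (h : HC ε p (j+2) ℝ ρ)
    (hg : grd ρ p ≠ 0) {Q : E → E} {t : E → ℝ} (hQ : HC ε p (j+1) E Q) (ht : HC ε p (j+1) ℝ t)
    (hQp : Q p = p) (htp : t p = 0)
    (hQt : ∀ᶠ z in 𝓝 p, Q z - t z • unm ρ (Q z) = z ∧ ρ (Q z) = 0) :
    (∀ᶠ z in 𝓝 p, fderiv ℝ t z = - innerSL ℝ (unm ρ (Q z))) ∧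
    (∀ v, fderiv ℝ ρ p v = 0 → fderiv ℝ Q p v = v) := by
  have hu := HC_unm h0 h1 h hg
  have cQ : Tendsto Q (𝓝 p) (𝓝 p) := by
    have := hQ.continuousAt h0
    rwa [ContinuousAt, hQp] at this
  have cg := (HC_grd h).continuousAt h0
  have key : ∀ᶠ z in 𝓝 p, DifferentiableAt ℝ Q z ∧ DifferentiableAt ℝ t z ∧ DifferentiableAt ℝ (unm ρ) (Q z) ∧
      DifferentiableAt ℝ ρ (Q z) ∧ (∀ᶠ q in 𝓝 (Q z), grd ρ q ≠ 0) ∧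
      (∀ᶠ z in 𝓝 z, Q z - t z • unm ρ (Q z) = z ∧ ρ (Q z) = 0) := by
    filter_upwards [hQ.1, ht.1, cQ.eventually hu.1, cQ.eventually h.1,
      cQ.eventually (eventually_eventually_nhds.2 (cg.eventually_ne hg)), eventually_eventually_nhds.2 hQt] with z a1 a2 a3 a4 a5 a6
    exact ⟨a1, a2, a3, a4, a5, a6⟩
  have main : ∀ z, (DifferentiableAt ℝ Q z ∧ DifferentiableAt ℝ t z ∧ DifferentiableAt ℝ (unm ρ) (Q z) ∧
      DifferentiableAt ℝ ρ (Q z) ∧ (∀ᶠ q in 𝓝 (Q z), grd ρ q ≠ 0) ∧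
      (∀ᶠ z in 𝓝 z, Q z - t z • unm ρ (Q z) = z ∧ ρ (Q z) = 0)) → ∀ v,
      fderiv ℝ Q z v - (t z • fderiv ℝ (unm ρ) (Q z) (fderiv ℝ Q z v) + fderiv ℝ t z v • unm ρ (Q z)) = v ∧
      fderiv ℝ t z v = - inner ℝ (unm ρ (Q z)) v := by
    rintro z ⟨a1, a2, a3, a4, a5, a6⟩ v
    have g0 : grd ρ (Q z) ≠ 0 := a5.self_of_nhds
    have b1 : HasFDerivAt (fun x => unm ρ (Q x)) ((fderiv ℝ (unm ρ) (Q z)).comp (fderiv ℝ Q z)) z :=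
      a3.hasFDerivAt.comp z a1.hasFDerivAt
    have b2 := a1.hasFDerivAt.sub (a2.hasFDerivAt.smul b1)
    have b3 : HasFDerivAt (fun x => Q x - t x • unm ρ (Q x)) (ContinuousLinearMap.id ℝ E) z :=
      (hasFDerivAt_id z).congr_of_eventuallyEq (a6.mono fun x hx => hx.1)
    have b4 := b2.unique b3
    have b5 := DFunLike.congr_fun b4 v
    simp only [ContinuousLinearMap.coe_id', id_eq, ContinuousLinearMap.sub_apply, ContinuousLinearMap.add_apply, ContinuousLinearMap.smul_apply, ContinuousLinearMap.smulRight_apply, ContinuousLinearMap.comp_apply] at b5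
    refine ⟨b5, ?_⟩
    -- ρ∘Q = 0
    have c1 : HasFDerivAt (fun x => ρ (Q x)) ((fderiv ℝ ρ (Q z)).comp (fderiv ℝ Q z)) z :=
      a4.hasFDerivAt.comp z a1.hasFDerivAt
    have c2 : HasFDerivAt (fun x => ρ (Q x)) (0 : E →L[ℝ] ℝ) z :=
      (hasFDerivAt_const (0:ℝ) z).congr_of_eventuallyEq (a6.mono fun x hx => hx.2)
    have c3 := DFunLike.congr_fun (c1.unique c2) v
    simp only [ContinuousLinearMap.comp_apply, ContinuousLinearMap.zero_apply, ← inner_grd] at c3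
    have c4 : inner ℝ (unm ρ (Q z)) (fderiv ℝ Q z v) = 0 := by
      rw [unm, inner_smul_left, c3]; simp
    -- unit norm
    have d1 := a3.hasFDerivAt.inner ℝ a3.hasFDerivAt
    have d2 : HasFDerivAt (fun x => inner ℝ (unm ρ x) (unm ρ x)) (0 : E →L[ℝ] ℝ) (Q z) := by
      refine (hasFDerivAt_const (1:ℝ) (Q z)).congr_of_eventuallyEq (a5.mono fun x hx => ?_)
      simp only [real_inner_self_eq_norm_sq, norm_unm hx]; norm_num
    have d3 := DFunLike.congr_fun (d1.unique d2) (fderiv ℝ Q z v)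
    simp at d3
    rw [real_inner_comm] at d3
    have d4 : inner ℝ (unm ρ (Q z)) (fderiv ℝ (unm ρ) (Q z) (fderiv ℝ Q z v)) = 0 := by
      have := real_inner_comm (unm ρ (Q z)) (fderiv ℝ (unm ρ) (Q z) (fderiv ℝ Q z v))
      linarith
    have e1 := congrArg (fun w => inner ℝ (unm ρ (Q z)) w) b5
    simp only [inner_sub_right, inner_add_right, inner_smul_right, c4, d4, real_inner_self_eq_norm_sq, norm_unm g0] at e1
    linarith
  constructor
  · filter_upwards [key] with z hz
    ext v
    simpa using (main z hz v).2
  · intro v hv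
    obtain ⟨m1, m2⟩ := main p key.self_of_nhds v
    rw [htp, hQp] at m1
    rw [hQp] at m2
    have : inner ℝ (unm ρ p) v = 0 := by
      rw [unm, inner_smul_left, inner_grd, hv]; simp
    rw [this, neg_zero] at m2
    simpa [m2] using m1

end SDsec2

section SDsec3
variable {E : Type} [NormedAddCommGroup E] [InnerProductSpace ℝ E] [FiniteDimensional ℝ E]

theorem SDball {Ω : Set E} (hΩ : IsOpen Ω) {x : E} (hx : x ∈ Ω) (hne : (frontier Ω).Nonempty) :
    ball x (infDist x (frontier Ω)) ⊆ Ω := by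
  by_cases h : infDist x (frontier Ω) ≤ 0
  · rw [ball_eq_empty.2 h]; exact empty_subset _
  push Not at h
  refine (convex_ball x _).isPreconnected.subset_of_closure_inter_subset hΩ ⟨x, mem_ball_self h, hx⟩ ?_
  rintro y ⟨hy1, hy2⟩
  by_contra hy
  have : y ∈ frontier Ω := by rw [frontier, hΩ.interior_eq]; exact ⟨hy1, hy⟩
  have := infDist_le_dist_of_mem (x := x) this
  rw [mem_ball, dist_comm] at hy2
  linarith

theorem SDc {Ω : Set E} (hΩ : IsOpen Ω) {W : Set E} (hW : IsOpen W) {ρ : E → ℝ}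
    (hΩW : Ω ∩ W = {z ∈ W | ρ z < 0}) {x y : E} (hx : x ∈ Ω) (hy : y ∈ frontier Ω) (hyW : y ∈ W)
    (hxy : infDist x (frontier Ω) = dist x y) (hd : DifferentiableAt ℝ ρ y) (hρ : ρ y = 0)
    (hg : grd ρ y ≠ 0) : y - infDist x (frontier Ω) • unm ρ y = x := by
  have hball := SDball hΩ hx ⟨y, hy⟩
  rw [hxy, dist_eq_norm] at *
  set w := x - y with hw
  have hw0 : w ≠ 0 := by
    intro h
    have : x = y := sub_eq_zero.1 h
    rw [frontier, hΩ.interior_eq] at hy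
    exact hy.2 (this ▸ hx)
  have key : ∀ v : E, 0 < inner ℝ w v → inner ℝ (grd ρ y) v ≤ 0 := by
    intro v hv
    rw [inner_grd]
    have h1 : HasDerivAt (fun s : ℝ => ρ (y + s • v)) (fderiv ℝ ρ y v) 0 := by
      have h2 : HasDerivAt (fun s : ℝ => y + s • v) v 0 := by
        simpa using ((hasDerivAt_id (0:ℝ)).smul_const v).const_add y
      have h3 : HasFDerivAt ρ (fderiv ℝ ρ y) (y + (0:ℝ) • v) := by simpa using hd.hasFDerivAt
      exact h3.comp_hasDerivAt (0:ℝ) h2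
    have h4 := h1.tendsto_slope_zero_right
    refine le_of_tendsto h4 ?_
    have e1 : ∀ᶠ s : ℝ in 𝓝[>] 0, y + s • v ∈ W := by
      have : Tendsto (fun s : ℝ => y + s • v) (𝓝[>] 0) (𝓝 (y + (0:ℝ) • v)) :=
        (by fun_prop : Continuous (fun s : ℝ => y + s • v)).continuousAt.tendsto.mono_left nhdsWithin_le_nhds
      rw [zero_smul, add_zero] at this
      exact this.eventually (hW.mem_nhds hyW)
    have e2 : ∀ᶠ s : ℝ in 𝓝[>] 0, s * ‖v‖^2 < 2 * inner ℝ w v := by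
      have : Tendsto (fun s : ℝ => s * ‖v‖^2) (𝓝[>] 0) (𝓝 ((0:ℝ) * ‖v‖^2)) :=
        (by fun_prop : Continuous (fun s : ℝ => s * ‖v‖^2)).continuousAt.tendsto.mono_left nhdsWithin_le_nhds
      refine this.eventually (gt_mem_nhds ?_)
      linarith
    filter_upwards [e1, e2, self_mem_nhdsWithin] with s hs1 hs2 hs3
    have hs3 : 0 < s := hs3
    have : y + s • v ∈ ball x ‖w‖ := by
      rw [mem_ball, dist_comm, dist_eq_norm]
      have : x - (y + s • v) = w - s • v := by rw [hw]; abel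
      rw [this]
      refine lt_of_pow_lt_pow_left₀ 2 (norm_nonneg _) ?_
      rw [norm_sub_sq_real, inner_smul_right, norm_smul, Real.norm_eq_abs, mul_pow, sq_abs]
      nlinarith
    have : y + s • v ∈ Ω ∩ W := ⟨hball this, hs1⟩
    rw [hΩW] at this
    have h5 : ρ (y + s • v) < 0 := this.2
    simp only [zero_add, zero_smul, add_zero, hρ, sub_zero, smul_eq_mul]
    exact (mul_neg_of_pos_of_neg (inv_pos.2 hs3) h5).le
  set g := grd ρ y with hgd
  have hwp : 0 < ‖w‖ := norm_pos_iff.2 hw0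
  have hgp : 0 < ‖g‖ := norm_pos_iff.2 hg
  have k1 := key w (by rw [real_inner_self_eq_norm_sq]; positivity)
  have k2 : ∀ τ : ℝ, 0 < τ → ‖w‖^2 * ‖g‖^2 - (inner ℝ g w)^2 ≤ τ * (- inner ℝ g w) := by
    intro τ hτ
    have := key (τ • w + (‖w‖^2 • g - (inner ℝ g w) • w)) (by
      simp only [inner_add_right, inner_sub_right, inner_smul_right, real_inner_self_eq_norm_sq, real_inner_comm w g]
      have : 0 < τ * ‖w‖^2 := by positivity
      linarith)
    simp only [inner_add_right, inner_sub_right, inner_smul_right, real_inner_self_eq_norm_sq] at this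
    nlinarith
  have k3 : ‖w‖^2 * ‖g‖^2 - (inner ℝ g w)^2 ≤ 0 := by
    refine ge_of_tendsto (x := 𝓝[>] (0:ℝ)) (f := fun τ : ℝ => τ * (- inner ℝ g w)) ?_ ?_
    · have : Tendsto (fun τ : ℝ => τ * (- inner ℝ g w)) (𝓝[>] 0) (𝓝 ((0:ℝ) * (- inner ℝ g w))) :=
        (by fun_prop : Continuous (fun τ : ℝ => τ * (- inner ℝ g w))).continuousAt.tendsto.mono_left nhdsWithin_le_nhds
      simpa using this
    · filter_upwards [self_mem_nhdsWithin] with τ hτ using k2 τ hτ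
  have k4 : inner ℝ g w ≤ - (‖w‖ * ‖g‖) := by
    have : ‖w‖ * ‖g‖ ≤ - inner ℝ g w := by
      refine le_of_not_gt (fun hlt => ?_)
      nlinarith
    linarith
  have k5 : ‖w‖ • g + ‖g‖ • w = 0 := by
    rw [← norm_eq_zero, ← sq_eq_zero_iff]
    refine le_antisymm ?_ (sq_nonneg _)
    rw [norm_add_sq_real, inner_smul_left, inner_smul_right, norm_smul, norm_smul, norm_norm, norm_norm]
    simp
    nlinarith [mul_pos hwp hgp]
  have k6 : w = - (‖w‖ • unm ρ y) := by
    have : ‖g‖ • w = - (‖w‖ • g) := by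
      rw [eq_neg_iff_add_eq_zero, add_comm]; exact k5
    rw [unm, ← hgd, smul_comm, ← smul_neg, ← this, smul_smul, inv_mul_cancel₀ hgp.ne', one_smul]
  have : y + w = x := by rw [hw]; abel
  rw [← this, sub_eq_add_neg, ← k6]

theorem SDd {Ω : Set E} (hΩ : IsOpen Ω) {W : Set E} (hW : IsOpen W) {ρ : E → ℝ} (hc : ContinuousOn ρ W)
    (hΩW : Ω ∩ W = {z ∈ W | ρ z < 0}) {y : E} (hy : y ∈ frontier Ω) (hyW : y ∈ W) : ρ y = 0 := by
  rw [frontier, hΩ.interior_eq] at hy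
  apply le_antisymm
  · by_contra h
    push Not at h
    have h1 : ∀ᶠ z in 𝓝 y, 0 < ρ z := (hc.continuousAt (hW.mem_nhds hyW)).eventually (lt_mem_nhds h)
    have h2 := mem_closure_iff_frequently.1 hy.1
    obtain ⟨z, hz1, hz2, hz3⟩ := (h2.and_eventually (h1.and (hW.mem_nhds hyW))).exists
    have : z ∈ Ω ∩ W := ⟨hz1, hz3⟩
    rw [hΩW] at this
    exact absurd this.2 (by linarith)
  · by_contra h
    push Not at h
    have : y ∈ {z ∈ W | ρ z < 0} := ⟨hyW, h⟩
    rw [← hΩW] at this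
    exact hy.2 this.1

theorem SD {ε : ℝ} (h0 : 0 < ε) (h1 : ε ≤ 1) {j : ℕ} {Ω : Set E} (hΩ : IsOpen Ω) {p : E} (hpf : p ∈ frontier Ω)
    {W : Set E} (hW : IsOpen W) (hpW : p ∈ W) {ρ : E → ℝ} (h : HC ε p (j+2) ℝ ρ) (hc : ContinuousOn ρ W)
    (hΩW : Ω ∩ W = {z ∈ W | ρ z < 0}) (hd : fderiv ℝ ρ p ≠ 0) :
    ∃ d : E → ℝ, HC ε p (j+2) ℝ d ∧ (∃ c > 0, fderiv ℝ d p = c • fderiv ℝ ρ p ∧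
      ∀ v, fderiv ℝ ρ p v = 0 → fderiv ℝ (fderiv ℝ d) p v v = c * fderiv ℝ (fderiv ℝ ρ) p v v) ∧
      ∃ V ∈ 𝓝 p, (∀ x ∈ V, d x < 0 → x ∈ Ω) ∧ ∀ x ∈ Ω ∩ V, infDist x (frontier Ω) = - d x := by
  have hg : grd ρ p ≠ 0 := by
    intro hh
    apply hd
    ext v
    rw [← inner_grd, hh]; simp
  have hp0 : ρ p = 0 := SDd hΩ hW hc hΩW hpf hpW
  obtain ⟨Q, t, hQ, ht, hQp, htp, hQt, hl⟩ := SDa h0 h1 h hg hp0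
  obtain ⟨hdt, hDQ⟩ := SDb h0 h1 h hg hQ ht hQp htp hQt
  have hu := HC_unm h0 h1 h hg
  have hgpos : 0 < ‖grd ρ p‖ := norm_pos_iff.2 hg
  have cQ : Tendsto Q (𝓝 p) (𝓝 p) := by
    have := hQ.continuousAt h0
    rwa [ContinuousAt, hQp] at this
  have hdd : (fun z => innerSL ℝ (unm ρ (Q z))) =ᶠ[𝓝 p] fderiv ℝ (fun z => - t z) := by
    filter_upwards [hdt] with z hz
    have : fderiv ℝ (fun z => - t z) z = - fderiv ℝ t z := fderiv_fun_neg
    rw [this, hz, neg_neg]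
  refine ⟨fun z => - t z, ⟨ht.1.mono fun z hz => hz.neg, ?_⟩, ⟨‖grd ρ p‖⁻¹, inv_pos.2 hgpos, ?_, ?_⟩, ?_⟩
  · have hu' : HC ε (Q p) (j+1) E (unm ρ) := by rw [hQp]; exact hu
    have := (HC.comp h0 h1 hu' hQ (hQ.toLL h0)).clm (innerSL ℝ : E →L[ℝ] E →L[ℝ] ℝ)
    exact this.congr hdd
  · have := hdd.self_of_nhds
    rw [← this]
    simp only [hQp]
    ext v
    simp [unm, inner_smul_left, inner_grd]
  · intro v hv
    rw [← hdd.fderiv_eq]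
    have du : DifferentiableAt ℝ (unm ρ) (Q p) := by rw [hQp]; exact hu.1.self_of_nhds
    have dQ : DifferentiableAt ℝ Q p := hQ.1.self_of_nhds
    have a1 : HasFDerivAt (fun z => unm ρ (Q z)) ((fderiv ℝ (unm ρ) (Q p)).comp (fderiv ℝ Q p)) p :=
      du.hasFDerivAt.comp p dQ.hasFDerivAt
    have a2 : HasFDerivAt (fun z => innerSL ℝ (unm ρ (Q z))) (((innerSL ℝ : E →L[ℝ] E →L[ℝ] ℝ)).comp ((fderiv ℝ (unm ρ) (Q p)).comp (fderiv ℝ Q p))) p :=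
      ((innerSL ℝ : E →L[ℝ] E →L[ℝ] ℝ)).hasFDerivAt.comp p a1
    rw [a2.fderiv]
    simp only [ContinuousLinearMap.comp_apply, innerSL_apply_apply, hDQ v hv]
    rw [hQp] at du ⊢
    have b1 : HasFDerivAt (fun z => inner ℝ v (unm ρ z)) ((innerSL ℝ v).comp (fderiv ℝ (unm ρ) p)) p :=
      (innerSL ℝ v).hasFDerivAt.comp p du.hasFDerivAt
    have dg : DifferentiableAt ℝ (grd ρ) p := (HC_grd h).1.self_of_nhds
    have dn : DifferentiableAt ℝ (fun z => ‖grd ρ z‖⁻¹) p := (dg.norm ℝ hg).inv hgpos.ne'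
    have d2 : DifferentiableAt ℝ (fderiv ℝ ρ) p := h.2.1.self_of_nhds
    have b2 : HasFDerivAt (fun z => fderiv ℝ ρ z v) ((ContinuousLinearMap.apply ℝ ℝ v).comp (fderiv ℝ (fderiv ℝ ρ) p)) p :=
      (ContinuousLinearMap.apply ℝ ℝ v).hasFDerivAt.comp p d2.hasFDerivAt
    have b3 := dn.hasFDerivAt.mul b2
    have b4 : (fun z => inner ℝ v (unm ρ z)) = (fun z => ‖grd ρ z‖⁻¹) * (fun z => fderiv ℝ ρ z v) := by
      funext z
      simp only [Pi.mul_apply, ← inner_grd, unm, inner_smul_right, real_inner_comm]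
    rw [b4] at b1
    have b5 := DFunLike.congr_fun (b1.unique b3) v
    simp [hv] at b5
    rw [real_inner_comm, b5]
  · have hstr : HasStrictFDerivAt ρ (fderiv ℝ ρ p) p :=
      (h.contDiffAt h0).hasStrictFDerivAt (by norm_cast)
    have s1 := hstr.isLittleO.def (c := ‖grd ρ p‖ / 4) (by positivity)
    have s2 : ∀ᶠ x in 𝓝 p, ‖ρ x - ρ (Q x) - fderiv ℝ ρ p (x - Q x)‖ ≤ ‖grd ρ p‖ / 4 * ‖x - Q x‖ := by
      have : Tendsto (fun x => (x, Q x)) (𝓝 p) (𝓝 (p, p)) := by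
        exact tendsto_id.prodMk_nhds cQ
      exact this.eventually s1
    have s3 : ∀ᶠ x in 𝓝 p, ‖grd ρ p‖ / 2 < fderiv ℝ ρ p (unm ρ (Q x)) := by
      have c1 : Tendsto (fun x => fderiv ℝ ρ p (unm ρ (Q x))) (𝓝 p) (𝓝 (fderiv ℝ ρ p (unm ρ p))) :=
        ((fderiv ℝ ρ p).continuous.tendsto _).comp ((hu.continuousAt h0).tendsto.comp cQ)
      refine c1.eventually (lt_mem_nhds ?_)
      rw [← inner_grd, unm, inner_smul_right, real_inner_self_eq_norm_sq]
      field_simp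
      norm_num
    have s4 : ∀ᶠ x in 𝓝 p, grd ρ (Q x) ≠ 0 := cQ.eventually (((HC_grd h).continuousAt h0).eventually_ne hg)
    have F1 : ∀ᶠ x in 𝓝 p, - t x < 0 → x ∈ Ω := by
      filter_upwards [s2, s3, s4, hQt, hW.mem_nhds hpW] with x a1 a2 a3 a4 a5 a6
      have e1 : x - Q x = - (t x • unm ρ (Q x)) := by
        nth_rw 1 [← a4.1]; abel
      rw [e1, a4.2, norm_neg, norm_smul, norm_unm a3, map_neg, map_smul, Real.norm_eq_abs, Real.norm_eq_abs,
        abs_of_pos (show 0 < t x by linarith), smul_eq_mul] at a1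
      have : ρ x < 0 := by
        have := (abs_le.1 a1).2
        have : t x * (‖grd ρ p‖ / 2) < t x * fderiv ℝ ρ p (unm ρ (Q x)) := by
          apply mul_lt_mul_of_pos_left a2; linarith
        nlinarith
      have : x ∈ {z ∈ W | ρ z < 0} := ⟨a5, this⟩
      rw [← hΩW] at this
      exact this.1
    have good : ∀ᶠ x in 𝓝 ((p, 0) : E × ℝ), (∀ z, Gm ρ x = (z, 0) → Q z = x.1 ∧ t z = x.2) ∧
        x.1 ∈ W ∧ DifferentiableAt ℝ ρ x.1 ∧ grd ρ x.1 ≠ 0 := by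
      have c1 : Tendsto (fun x : E × ℝ => x.1) (𝓝 (p, 0)) (𝓝 p) := continuous_fst.continuousAt
      filter_upwards [hl, c1.eventually (hW.mem_nhds hpW), c1.eventually h.1,
        c1.eventually (((HC_grd h).continuousAt h0).eventually_ne hg)] with x a1 a2 a3 a4
      exact ⟨a1, a2, a3, a4⟩
    obtain ⟨r, hr, hgood⟩ := Metric.eventually_nhds_iff_ball.1 good
    refine ⟨{x | - t x < 0 → x ∈ Ω} ∩ ball p (r/2), inter_mem F1 (ball_mem_nhds _ (by positivity)), fun x hx => hx.1, ?_⟩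
    rintro x ⟨hxΩ, -, hxp⟩
    obtain ⟨y, hy, hxy⟩ := isClosed_frontier.exists_infDist_eq_dist ⟨p, hpf⟩ x
    have i1 : infDist x (frontier Ω) ≤ dist x p := infDist_le_dist_of_mem hpf
    rw [mem_ball] at hxp
    have i2 : dist y p < r := by
      have := dist_triangle_left y p x
      linarith
    obtain ⟨g1, g2, g3, g4⟩ := hgood (y, infDist x (frontier Ω)) (by
      rw [mem_ball, Prod.dist_eq, max_lt_iff]
      refine ⟨i2, ?_⟩
      rw [Real.dist_eq, sub_zero, abs_of_nonneg infDist_nonneg]; linarith)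
    have hy0 := SDd hΩ hW hc hΩW hy g2
    have := SDc hΩ hW hΩW hxΩ hy g2 hxy g3 hy0 g4
    have := (g1 x (by simp [Gm, this, hy0])).2
    simp [this]

end SDsec3

section Taylor
variable {E : Type} [NormedAddCommGroup E] [NormedSpace ℝ E]

theorem T_line {F : Type} [NormedAddCommGroup F] [NormedSpace ℝ F] {f : E → F} {z w : E} {s : ℝ}
    (h : DifferentiableAt ℝ f (z + s • w)) : HasDerivAt (fun s : ℝ => f (z + s • w)) (fderiv ℝ f (z + s • w) w) s := by
  have h2 : HasDerivAt (fun s : ℝ => z + s • w) w s := by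
    simpa using ((hasDerivAt_id s).smul_const w).const_add z
  exact h.hasFDerivAt.comp_hasDerivAt s h2

theorem T0 {ε : ℝ} {p : E} {F : Type} [NormedAddCommGroup F] [NormedSpace ℝ F] {f : E → F}
    (h : HC ε p 0 F f) : ∃ C ≥ 0, ∃ η > 0, ∀ z ∈ ball p η, ∀ w, ‖w‖ < η → ‖f (z + w) - f z‖ ≤ C * ‖w‖ ^ ε := by
  obtain ⟨C, hC, U, hU, H⟩ := h
  obtain ⟨r, hr, hrU⟩ := Metric.mem_nhds_iff.1 hU
  refine ⟨C, hC, r/2, by positivity, fun z hz w hw => ?_⟩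
  have hz' := mem_ball.1 hz
  have := H (z + w) (hrU ?_) z (hrU ?_)
  · simpa using this
  · rw [mem_ball, dist_eq_norm] at *
    have : z + w - p = (z - p) + w := by abel
    rw [this]
    have := norm_add_le (z - p) w
    linarith
  · rw [mem_ball]; linarith

theorem T_dom {p z w : E} {η : ℝ} (hz : z ∈ ball p (η/2)) (hw : ‖w‖ < η/2) {s : ℝ} (hs : s ∈ Icc (0:ℝ) 1) :
    z + s • w ∈ ball p η ∧ ‖s • w‖ ≤ ‖w‖ := by
  have h1 : ‖s • w‖ ≤ ‖w‖ := by
    rw [norm_smul, Real.norm_eq_abs, abs_of_nonneg hs.1]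
    exact mul_le_of_le_one_left (norm_nonneg _) hs.2
  refine ⟨?_, h1⟩
  rw [mem_ball, dist_eq_norm] at *
  have : z + s • w - p = (z - p) + s • w := by abel
  rw [this]
  have := norm_add_le (z - p) (s • w)
  linarith

theorem T1 {ε : ℝ} (h0 : 0 < ε) {p : E} {F : Type} [NormedAddCommGroup F] [NormedSpace ℝ F] {f : E → F}
    (h : HC ε p 1 F f) : ∃ C ≥ 0, ∃ η > 0, ∀ z ∈ ball p η, ∀ w, ‖w‖ < η →
      ‖f (z + w) - f z - fderiv ℝ f z w‖ ≤ C * ‖w‖ ^ ε * ‖w‖ := by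
  obtain ⟨C, hC, η, hη, H⟩ := T0 h.2
  obtain ⟨η', hη', H'⟩ := Metric.eventually_nhds_iff_ball.1 h.1
  refine ⟨C, hC, min η η' / 2, by positivity, fun z hz w hw => ?_⟩
  have hd : ∀ s ∈ Icc (0:ℝ) 1, HasDerivAt (fun s : ℝ => f (z + s • w) - f z - s • fderiv ℝ f z w)
      (fderiv ℝ f (z + s • w) w - fderiv ℝ f z w) s := by
    intro s hs
    have := (T_line (H' _ (ball_subset_ball (min_le_right _ _) (T_dom hz hw hs).1))).sub_const (f z)
    have := this.fun_sub ((hasDerivAt_id' s).smul_const (fderiv ℝ f z w))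
    simpa using this
  have := norm_image_sub_le_of_norm_deriv_le_segment_01' (C := C * ‖w‖ ^ ε * ‖w‖) (fun s hs => (hd s hs).hasDerivWithinAt) (fun s hs => ?_)
  · simpa using this
  · have hs' : s ∈ Icc (0:ℝ) 1 := ⟨hs.1, hs.2.le⟩
    have hz' : z ∈ ball p η := ball_subset_ball (by have := min_le_left η η'; have : 0 < min η η' := by positivity
                                                    linarith) hz
    have h3 := H z hz' (s • w) (by have := (T_dom hz hw hs').2; have := min_le_left η η'; have : 0 < min η η' := by positivity
                                   linarith)
    rw [← sub_apply]
    refine (ContinuousLinearMap.le_opNorm _ _).trans ?_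
    gcongr
    refine h3.trans ?_
    gcongr
    exact (T_dom hz hw hs').2

theorem T2 {ε : ℝ} (h0 : 0 < ε) {p : E} {F : Type} [NormedAddCommGroup F] [NormedSpace ℝ F] {f : E → F}
    (h : HC ε p 2 F f) : ∃ C ≥ 0, ∃ η > 0, ∀ z ∈ ball p η, ∀ w, ‖w‖ < η →
      ‖f (z + w) - f z - fderiv ℝ f z w - (1/2 : ℝ) • fderiv ℝ (fderiv ℝ f) z w w‖ ≤ C * ‖w‖ ^ ε * ‖w‖ * ‖w‖ := by
  obtain ⟨C, hC, η, hη, H⟩ := T1 h0 h.2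
  obtain ⟨η', hη', H'⟩ := Metric.eventually_nhds_iff_ball.1 h.1
  refine ⟨C, hC, min η η' / 2, by positivity, fun z hz w hw => ?_⟩
  have hd : ∀ s ∈ Icc (0:ℝ) 1, HasDerivAt (fun s : ℝ => f (z + s • w) - f z - s • fderiv ℝ f z w - (s^2/2) • fderiv ℝ (fderiv ℝ f) z w w)
      (fderiv ℝ f (z + s • w) w - fderiv ℝ f z w - s • fderiv ℝ (fderiv ℝ f) z w w) s := by
    intro s hs
    have := (T_line (H' _ (ball_subset_ball (min_le_right _ _) (T_dom hz hw hs).1))).sub_const (f z)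
    have := this.fun_sub ((hasDerivAt_id' s).smul_const (fderiv ℝ f z w))
    have e : HasDerivAt (fun s : ℝ => s^2/2) s s := by
      have := (hasDerivAt_pow 2 s).div_const 2
      exact this.congr_deriv (by simp)
    have := this.fun_sub (e.smul_const (fderiv ℝ (fderiv ℝ f) z w w))
    simpa using this
  have := norm_image_sub_le_of_norm_deriv_le_segment_01' (C := C * ‖w‖ ^ ε * ‖w‖ * ‖w‖) (fun s hs => (hd s hs).hasDerivWithinAt) (fun s hs => ?_)
  · simpa using this
  · have hs' : s ∈ Icc (0:ℝ) 1 := ⟨hs.1, hs.2.le⟩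
    have hz' : z ∈ ball p η := ball_subset_ball (by have := min_le_left η η'; have : 0 < min η η' := by positivity
                                                    linarith) hz
    have h3 := H z hz' (s • w) (by have := (T_dom hz hw hs').2; have := min_le_left η η'; have : 0 < min η η' := by positivity
                                   linarith)
    have e : fderiv ℝ f (z + s • w) w - fderiv ℝ f z w - s • fderiv ℝ (fderiv ℝ f) z w w =
        (fderiv ℝ f (z + s • w) - fderiv ℝ f z - fderiv ℝ (fderiv ℝ f) z (s • w)) w := by simp
    rw [e]
    refine (ContinuousLinearMap.le_opNorm _ _).trans ?_
    gcongr
    refine h3.trans ?_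
    gcongr
    all_goals exact (T_dom hz hw hs').2

theorem T3 {ε : ℝ} (h0 : 0 < ε) {p : E} {F : Type} [NormedAddCommGroup F] [NormedSpace ℝ F] {f : E → F}
    (h : HC ε p 3 F f) : ∃ C ≥ 0, ∃ η > 0, ∀ z ∈ ball p η, ∀ w, ‖w‖ < η →
      ‖f (z + w) - f z - fderiv ℝ f z w - (1/2 : ℝ) • fderiv ℝ (fderiv ℝ f) z w w
        - (1/6 : ℝ) • fderiv ℝ (fderiv ℝ (fderiv ℝ f)) z w w w‖ ≤ C * ‖w‖ ^ ε * ‖w‖ * ‖w‖ * ‖w‖ := by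
  obtain ⟨C, hC, η, hη, H⟩ := T2 h0 h.2
  obtain ⟨η', hη', H'⟩ := Metric.eventually_nhds_iff_ball.1 h.1
  refine ⟨C, hC, min η η' / 2, by positivity, fun z hz w hw => ?_⟩
  have hd : ∀ s ∈ Icc (0:ℝ) 1, HasDerivAt (fun s : ℝ => f (z + s • w) - f z - s • fderiv ℝ f z w - (s^2/2) • fderiv ℝ (fderiv ℝ f) z w w
        - (s^3/6) • fderiv ℝ (fderiv ℝ (fderiv ℝ f)) z w w w)
      (fderiv ℝ f (z + s • w) w - fderiv ℝ f z w - s • fderiv ℝ (fderiv ℝ f) z w w - (s^2/2) • fderiv ℝ (fderiv ℝ (fderiv ℝ f)) z w w w) s := by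
    intro s hs
    have := (T_line (H' _ (ball_subset_ball (min_le_right _ _) (T_dom hz hw hs).1))).sub_const (f z)
    have := this.fun_sub ((hasDerivAt_id' s).smul_const (fderiv ℝ f z w))
    have e : HasDerivAt (fun s : ℝ => s^2/2) s s := by
      have := (hasDerivAt_pow 2 s).div_const 2
      exact this.congr_deriv (by simp)
    have e' : HasDerivAt (fun s : ℝ => s^3/6) (s^2/2) s := by
      have := (hasDerivAt_pow 3 s).div_const 6
      exact this.congr_deriv (by push_cast; ring)
    have := this.fun_sub (e.smul_const (fderiv ℝ (fderiv ℝ f) z w w))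
    have := this.fun_sub (e'.smul_const (fderiv ℝ (fderiv ℝ (fderiv ℝ f)) z w w w))
    simpa using this
  have := norm_image_sub_le_of_norm_deriv_le_segment_01' (C := C * ‖w‖ ^ ε * ‖w‖ * ‖w‖ * ‖w‖) (fun s hs => (hd s hs).hasDerivWithinAt) (fun s hs => ?_)
  · simpa using this
  · have hs' : s ∈ Icc (0:ℝ) 1 := ⟨hs.1, hs.2.le⟩
    have hz' : z ∈ ball p η := ball_subset_ball (by have := min_le_left η η'; have : 0 < min η η' := by positivity
                                                    linarith) hz
    have h3 := H z hz' (s • w) (by have := (T_dom hz hw hs').2; have := min_le_left η η'; have : 0 < min η η' := by positivity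
                                   linarith)
    have e : fderiv ℝ f (z + s • w) w - fderiv ℝ f z w - s • fderiv ℝ (fderiv ℝ f) z w w - (s^2/2) • fderiv ℝ (fderiv ℝ (fderiv ℝ f)) z w w w =
        (fderiv ℝ f (z + s • w) - fderiv ℝ f z - fderiv ℝ (fderiv ℝ f) z (s • w) - (1/2 : ℝ) • fderiv ℝ (fderiv ℝ (fderiv ℝ f)) z (s • w) (s • w)) w := by
      simp only [sub_apply, map_smul, smul_apply, smul_smul]
      congr 2; ring
    rw [e]
    refine (ContinuousLinearMap.le_opNorm _ _).trans ?_
    gcongr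
    refine h3.trans ?_
    gcongr
    all_goals exact (T_dom hz hw hs').2

end Taylor

section Alg
variable {E : Type} [NormedAddCommGroup E] [NormedSpace ℂ E] [NormedSpace ℝ E] [IsScalarTower ℝ ℂ E]

theorem csm (l : ℂ) (X : E) : l • X = l.re • X + l.im • (Complex.I • X) := by
  have h : ∀ a : ℝ, ∀ Y : E, a • Y = (a : ℂ) • Y := fun a Y => by
    rw [← Complex.coe_algebraMap, algebraMap_smul]
  rw [h, h, smul_smul, ← add_smul]
  congr 1
  exact (Complex.re_add_im l).symm

theorem II (X : E) : Complex.I • (Complex.I • X) = - X := by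
  rw [smul_smul, Complex.I_mul_I, neg_smul, one_smul]

theorem nI (X : E) : ‖Complex.I • X‖ = ‖X‖ := by
  rw [norm_smul, Complex.norm_I, one_mul]

/-- the `(2,0)`-part -/
def gam (B : E →L[ℝ] E →L[ℝ] ℝ) (X Y : E) : ℂ :=
  ⟨(B X Y - B (Complex.I • X) (Complex.I • Y)) / 2, -(B (Complex.I • X) Y + B X (Complex.I • Y)) / 2⟩

/-- the `(1,1)`-part -/
def hh (B : E →L[ℝ] E →L[ℝ] ℝ) (X Y : E) : ℂ :=
  ⟨(B X Y + B (Complex.I • X) (Complex.I • Y)) / 2, (B (Complex.I • X) Y - B X (Complex.I • Y)) / 2⟩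

/-- Levi form of a bilinear form -/
def Hf (B : E →L[ℝ] E →L[ℝ] ℝ) (X : E) : ℝ := (B X X + B (Complex.I • X) (Complex.I • X)) / 4

theorem bil (B : E →L[ℝ] E →L[ℝ] ℝ) (X Y : E) (l m : ℂ) :
    B (l • X) (m • Y) = (gam B X Y * (l * m)).re + (hh B X Y * (star l * m)).re := by
  rw [csm l X, csm m Y]
  simp only [map_add, map_smul, add_apply, smul_apply, smul_eq_mul, gam, hh, Complex.mul_re, Complex.mul_im,
    Complex.star_def, Complex.conj_re, Complex.conj_im]
  ring

theorem hh_add (B : E →L[ℝ] E →L[ℝ] ℝ) (X Y Z : E) : hh B X (Y + Z) = hh B X Y + hh B X Z := by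
  apply Complex.ext <;> simp only [hh, map_add, smul_add, Complex.add_re, Complex.add_im] <;> ring

theorem hh_smul (B : E →L[ℝ] E →L[ℝ] ℝ) (X Y : E) (l : ℂ) : hh B X (l • Y) = l * hh B X Y := by
  have e : Complex.I • (l • Y) = l.re • (Complex.I • Y) - l.im • Y := by
    rw [smul_comm, csm l (Complex.I • Y), II, smul_neg, sub_eq_add_neg]
  rw [hh, e, csm l Y]
  apply Complex.ext <;> simp only [hh, map_add, map_sub, map_smul, smul_eq_mul, Complex.mul_re, Complex.mul_im] <;> ring

theorem hh_self (B : E →L[ℝ] E →L[ℝ] ℝ) (hB : ∀ v w, B v w = B w v) (X : E) : hh B X X = ((2 * Hf B X : ℝ) : ℂ) := by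
  apply Complex.ext
  · simp only [hh, Hf, Complex.ofReal_re]; ring
  · simp only [hh, Complex.ofReal_im, hB (Complex.I • X) X]; ring

theorem Bb {B : E →L[ℝ] E →L[ℝ] ℝ} {K : ℝ} (hK : ‖B‖ ≤ K) (X Y : E) : |B X Y| ≤ K * ‖X‖ * ‖Y‖ := by
  refine (B.le_opNorm₂ X Y).trans ?_
  gcongr

theorem gam_le {B : E →L[ℝ] E →L[ℝ] ℝ} {K : ℝ} (hK : ‖B‖ ≤ K) (X Y : E) : ‖gam B X Y‖ ≤ 2 * K * ‖X‖ * ‖Y‖ := by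
  refine (Complex.norm_le_abs_re_add_abs_im _).trans ?_
  simp only [gam]
  have a1 := abs_le.1 (Bb hK X Y)
  have a2 := abs_le.1 (Bb hK (Complex.I • X) (Complex.I • Y))
  have a3 := abs_le.1 (Bb hK (Complex.I • X) Y)
  have a4 := abs_le.1 (Bb hK X (Complex.I • Y))
  rw [nI] at a3 a4
  rw [nI, nI] at a2
  have b1 : |(B X Y - B (Complex.I • X) (Complex.I • Y)) / 2| ≤ K * ‖X‖ * ‖Y‖ := abs_le.2 ⟨by linarith, by linarith⟩
  have b2 : |-(B (Complex.I • X) Y + B X (Complex.I • Y)) / 2| ≤ K * ‖X‖ * ‖Y‖ := abs_le.2 ⟨by linarith, by linarith⟩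
  linarith

theorem hh_le {B : E →L[ℝ] E →L[ℝ] ℝ} {K : ℝ} (hK : ‖B‖ ≤ K) (X Y : E) : ‖hh B X Y‖ ≤ 2 * K * ‖X‖ * ‖Y‖ := by
  refine (Complex.norm_le_abs_re_add_abs_im _).trans ?_
  simp only [hh]
  have a1 := abs_le.1 (Bb hK X Y)
  have a2 := abs_le.1 (Bb hK (Complex.I • X) (Complex.I • Y))
  have a3 := abs_le.1 (Bb hK (Complex.I • X) Y)
  have a4 := abs_le.1 (Bb hK X (Complex.I • Y))
  rw [nI] at a3 a4
  rw [nI, nI] at a2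
  have b1 : |(B X Y + B (Complex.I • X) (Complex.I • Y)) / 2| ≤ K * ‖X‖ * ‖Y‖ := abs_le.2 ⟨by linarith, by linarith⟩
  have b2 : |(B (Complex.I • X) Y - B X (Complex.I • Y)) / 2| ≤ K * ‖X‖ * ‖Y‖ := abs_le.2 ⟨by linarith, by linarith⟩
  linarith

/-- diagonal value -/
theorem bil_diag (B : E →L[ℝ] E →L[ℝ] ℝ) (hB : ∀ v w, B v w = B w v) (X : E) (l : ℂ) :
    B (l • X) (l • X) = (gam B X X * l ^ 2).re + 2 * Hf B X * ‖l‖ ^ 2 := by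
  rw [bil, hh_self B hB, ← sq, Complex.re_ofReal_mul]
  congr 2
  rw [Complex.star_def, mul_comm, Complex.mul_conj, Complex.ofReal_re, Complex.normSq_eq_norm_sq]

theorem lemA (K : ℝ) (hK0 : 0 ≤ K) : ∃ C ≥ 0, ∀ (N : E →ₗ[ℂ] ℂ) (B : E →L[ℝ] E →L[ℝ] ℝ) (ν : E), 
    (∀ v w, B v w = B w v) → ‖B‖ ≤ K → N ν = 1 → ‖ν‖ ≤ K → ∀ X : E, ∃ Y : E, ‖Y‖ ≤ C * ‖X‖^2 ∧
      ∀ l : ℂ, ‖l‖ * ‖X‖ ≤ 1 → 2 * (l * N X).re - ‖l‖^2 * Hf B X - C * (‖l‖ * ‖X‖)^3 ≤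
        2 * (N (l • X + l^2 • Y)).re - (1/2) * B (l • X + l^2 • Y) (l • X + l^2 • Y) := by
  set C1 := K^2 with hC1
  refine ⟨C1 + K * C1 + K * C1^2, by positivity, fun N B ν hB hK hN hν X => ?_⟩
  set y : ℂ := gam B X X / 4 with hy
  have hyn : ‖y • ν‖ ≤ C1 * ‖X‖^2 := by
    rw [norm_smul, hy, norm_div]
    have := gam_le hK X X
    norm_num
    calc ‖gam B X X‖ / 4 * ‖ν‖ ≤ (2 * K * ‖X‖ * ‖X‖) / 4 * K := by gcongr
      _ ≤ C1 * ‖X‖^2 := by rw [hC1]; nlinarith [mul_nonneg (sq_nonneg K) (sq_nonneg ‖X‖)]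
  refine ⟨y • ν, hyn.trans ?_, fun l hl => ?_⟩
  · gcongr
    have : 0 ≤ K * C1 + K * C1^2 := by positivity
    linarith
  set Y := y • ν with hY
  have hNY : N Y = gam B X X / 4 := by rw [hY, map_smul, hN]; simp [hy]
  set a := ‖l‖ * ‖X‖ with ha
  have ha0 : 0 ≤ a := by positivity
  have n1 : ‖l • X‖ = a := norm_smul _ _
  have n2 : ‖l^2 • Y‖ ≤ C1 * a^2 := by
    rw [norm_smul, norm_pow, ha, mul_pow]
    nlinarith [mul_le_mul_of_nonneg_left hyn (sq_nonneg ‖l‖)]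
  have e1 : B (l • X + l^2 • Y) (l • X + l^2 • Y) = B (l • X) (l • X) + 2 * B (l • X) (l^2 • Y) + B (l^2 • Y) (l^2 • Y) := by
    simp only [map_add, add_apply, hB (l^2 • Y) (l • X)]; ring
  have e2 : N (l • X + l^2 • Y) = l * N X + gam B X X * l^2 / 4 := by
    rw [map_add, map_smul, map_smul, hNY, smul_eq_mul, smul_eq_mul]; ring
  have e3 : (gam B X X * l^2 / 4).re = (gam B X X * l^2).re / 4 := by
    rw [show (4:ℂ) = ((4:ℝ):ℂ) by norm_num, Complex.div_ofReal_re]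
  rw [e1, e2, bil_diag B hB, Complex.add_re, e3]
  have b1 : B (l • X) (l^2 • Y) ≤ K * a * (C1 * a^2) := by
    refine (le_abs_self _).trans ((Bb hK _ _).trans ?_)
    rw [n1]; gcongr
  have b2 : B (l^2 • Y) (l^2 • Y) ≤ K * (C1 * a^2) * (C1 * a^2) := by
    refine (le_abs_self _).trans ((Bb hK _ _).trans ?_)
    gcongr
  have b3 : a^4 ≤ a^3 := pow_le_pow_of_le_one ha0 hl (by norm_num)
  have b4 : K * C1^2 * a^4 ≤ K * C1^2 * a^3 := by gcongr
  have b5 : 0 ≤ C1 * a^3 := by positivity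
  have b6 : 0 ≤ K * C1^2 * a^3 := by positivity
  nlinarith

end Alg

section Alg2
variable {E : Type} [NormedAddCommGroup E] [NormedSpace ℂ E] [NormedSpace ℝ E] [IsScalarTower ℝ ℂ E]

theorem tri {T : E →L[ℝ] E →L[ℝ] E →L[ℝ] ℝ} {K : ℝ} (hK : ∀ X Y Z, |T X Y Z| ≤ K * ‖X‖ * ‖Y‖ * ‖Z‖) (X : E) : ∃ α β : ℂ,
    ‖α‖ ≤ 3 * K * ‖X‖^3 ∧ ‖β‖ ≤ 6 * K * ‖X‖^3 ∧
    ∀ l : ℂ, T (l • X) (l • X) (l • X) = (α * l^3).re + (β * (star l * l^2)).re := by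
  set J := Complex.I • X with hJ
  have nJ : ‖J‖ = ‖X‖ := nI X
  set c0 := T X X X with h0
  set c1 := T J X X + T X J X + T X X J with h1
  set c2 := T J J X + T J X J + T X J J with h2
  set c3 := T J J J with h3
  have q0 : |c0| ≤ K * ‖X‖^3 := (hK X X X).trans_eq (by ring)
  have q3 : |c3| ≤ K * ‖X‖^3 := (hK J J J).trans_eq (by rw [nJ]; ring)
  have q1 : |c1| ≤ 3 * (K * ‖X‖^3) := by
    have a1 := hK J X X
    have a2 := hK X J X
    have a3 := hK X X J
    rw [nJ] at a1 a2 a3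
    have := abs_add_three (T J X X) (T X J X) (T X X J)
    nlinarith
  have q2 : |c2| ≤ 3 * (K * ‖X‖^3) := by
    have a1 := hK J J X
    have a2 := hK J X J
    have a3 := hK X J J
    rw [nJ] at a1 a2 a3
    have := abs_add_three (T J J X) (T J X J) (T X J J)
    nlinarith
  rw [abs_le] at q0 q1 q2 q3
  have hq : 0 ≤ K * ‖X‖^3 := by linarith
  refine ⟨⟨(c0 - c2)/4, (c3 - c1)/4⟩, ⟨(3*c0 + c2)/4, -(3*c3 + c1)/4⟩, ?_, ?_, ?_⟩
  · refine (Complex.norm_le_abs_re_add_abs_im _).trans ?_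
    have b1 : |(c0 - c2)/4| ≤ K * ‖X‖^3 := abs_le.2 ⟨by linarith, by linarith⟩
    have b2 : |(c3 - c1)/4| ≤ K * ‖X‖^3 := abs_le.2 ⟨by linarith, by linarith⟩
    simp only
    linarith
  · refine (Complex.norm_le_abs_re_add_abs_im _).trans ?_
    have b1 : |(3*c0 + c2)/4| ≤ 3 * (K * ‖X‖^3) := abs_le.2 ⟨by linarith, by linarith⟩
    have b2 : |-(3*c3 + c1)/4| ≤ 3 * (K * ‖X‖^3) := abs_le.2 ⟨by linarith, by linarith⟩
    simp only
    linarith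
  · intro l
    rw [csm l X, ← hJ]
    simp only [map_add, map_smul, add_apply, smul_apply, smul_eq_mul, pow_succ, pow_zero, one_mul, Complex.mul_re, Complex.mul_im,
    Complex.star_def, Complex.conj_re, Complex.conj_im]
    rw [h0, h1, h2, h3]
    ring

theorem Tdiff {T : E →L[ℝ] E →L[ℝ] E →L[ℝ] ℝ} {K D a : ℝ} (hK : ∀ X Y Z, |T X Y Z| ≤ K * ‖X‖ * ‖Y‖ * ‖Z‖) (hK0 : 0 ≤ K) (hD : 0 ≤ D) {U R : E} (hU : ‖U‖ ≤ a)
    (hR : ‖R‖ ≤ D * a^2) (ha : a ≤ 1) : |T (U + R) (U + R) (U + R) - T U U U| ≤ 3 * K * D * (1 + D)^2 * a^4 := by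
  have ha0 : 0 ≤ a := (norm_nonneg _).trans hU
  have hP : ‖U + R‖ ≤ (1 + D) * a := by
    refine (norm_add_le _ _).trans ?_
    nlinarith [mul_nonneg hD ha0, mul_nonneg (mul_nonneg hD ha0) (sub_nonneg.2 ha)]
  have hU' : ‖U‖ ≤ (1 + D) * a := by nlinarith [mul_nonneg hD ha0]
  set P := U + R
  have e : T P P P - T U U U = T R P P + T U R P + T U U R := by
    simp only [P, map_add, add_apply]; ring
  have t1 : |T R P P| ≤ K * (D * a^2) * ((1+D)*a) * ((1+D)*a) := (hK _ _ _).trans (by gcongr)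
  have t2 : |T U R P| ≤ K * ((1+D)*a) * (D * a^2) * ((1+D)*a) := (hK _ _ _).trans (by gcongr)
  have t3 : |T U U R| ≤ K * ((1+D)*a) * ((1+D)*a) * (D * a^2) := (hK _ _ _).trans (by gcongr)
  rw [e]
  have := abs_add_three (T R P P) (T U R P) (T U U R)
  nlinarith

set_option maxHeartbeats 2000000 in
theorem lemB (K c0 : ℝ) (hK1 : 1 ≤ K) (hc0 : 0 < c0) : ∃ C ≥ 0, ∃ c' > 0, ∀ (N : E →ₗ[ℂ] ℂ) (B : E →L[ℝ] E →L[ℝ] ℝ)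
    (T : E →L[ℝ] E →L[ℝ] E →L[ℝ] ℝ) (ν : E), 
    (∀ v w, B v w = B w v) → ‖B‖ ≤ K → (∀ X Y Z, |T X Y Z| ≤ K * ‖X‖ * ‖Y‖ * ‖Z‖) → N ν = 1 → ‖ν‖ ≤ K → 
    ∀ X : E, c0 * ‖X‖^2 ≤ Hf B X → ‖N X‖ ≤ c' * ‖X‖ → ∃ Y Z : E, ‖Y‖ ≤ C * ‖X‖^2 ∧ ‖Z‖ ≤ C * ‖X‖^3 ∧
      ∀ l : ℂ, ‖l‖ * ‖X‖ ≤ 1 → 2 * (l * N X).re - ‖l‖^2 * Hf B X - C * (‖l‖ * ‖X‖)^4 ≤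
        2 * (N (l • X + l^2 • Y + l^3 • Z)).re - (1/2) * B (l • X + l^2 • Y + l^3 • Z) (l • X + l^2 • Y + l^3 • Z)
         - (1/6) * T (l • X + l^2 • Y + l^3 • Z) (l • X + l^2 • Y + l^3 • Z) (l • X + l^2 • Y + l^3 • Z) := by
  have hK0 : 0 < K := by linarith
  set c' := c0 / (2 * K^2) with hc'
  have hc'p : 0 < c' := by positivity
  -- bounds: |c| ≤ Cc |X|, |y| ≤ Cy |X|^2, |ν'| ≤ Cn
  set Cc := K / (2 * c0) with hCc
  set Cn := K + K^2 / c0 with hCn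
  set Cy := K + 2 * (Cc * c') with hCy
  set CY := Cc + Cy * Cn with hCY
  set CZ := (K * CY + K) * K with hCZ
  have p1 : 0 < Cc := by positivity
  have p2 : 0 < Cn := by positivity
  have p3 : 0 < Cy := by positivity
  have p4 : 0 < CY := by positivity
  have p5 : 0 < CZ := by positivity
  set D := CY + CZ with hD
  set C := D + K * D + K * D^2 + 3 * K * D * (1 + D)^2 with hC
  have hDC : D ≤ C := by
    have : 0 ≤ K * D + K * D^2 + 3 * K * D * (1 + D)^2 := by positivity
    linarith
  refine ⟨C, by positivity, c', hc'p, fun N B T ν hB hBK hTK hN hν X hX hNX => ?_⟩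
  by_cases hX0 : X = 0
  · refine ⟨0, 0, by rw [norm_zero]; positivity, by rw [norm_zero]; positivity, fun l hl => ?_⟩
    subst hX0
    simp [Hf]
  have hXp : 0 < ‖X‖ := norm_pos_iff.2 hX0
  have hHp : 0 < Hf B X := lt_of_lt_of_le (by positivity) hX
  obtain ⟨α, β, hα, hβ, hT⟩ := tri hTK X
  have hHc : ((2 * Hf B X : ℝ) : ℂ) ≠ 0 := by
    norm_cast; positivity
  set q : ℂ := hh B X ν / ((2 * Hf B X : ℝ) : ℂ) with hq
  have hqn : ‖q‖ * ‖X‖ ≤ K^2 / c0 := by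
    rw [hq, norm_div, Complex.norm_real, Real.norm_eq_abs, abs_of_pos (by positivity), div_mul_eq_mul_div, div_le_div_iff₀ (by positivity) hc0]
    have := hh_le hBK X ν
    calc ‖hh B X ν‖ * ‖X‖ * c0 ≤ (2 * K * ‖X‖ * K) * ‖X‖ * c0 := by gcongr; exact this.trans (by gcongr)
      _ = 2 * K^2 * (c0 * ‖X‖^2) := by ring
      _ ≤ 2 * K^2 * Hf B X := by gcongr
      _ = K^2 * (2 * Hf B X) := by ring
  set ν' := ν - q • X with hν'
  have hhν' : hh B X ν' = 0 := by
    rw [hν', sub_eq_add_neg, ← neg_smul, hh_add, hh_smul, hh_self B hB, hq]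
    field_simp
    ring
  have hNν' : 1/2 ≤ ‖N ν'‖ := by
    have e : N ν' = 1 - q * N X := by rw [hν', map_sub, map_smul, hN, smul_eq_mul]
    have b : ‖q * N X‖ ≤ 1/2 := by
      rw [norm_mul]
      calc ‖q‖ * ‖N X‖ ≤ ‖q‖ * (c' * ‖X‖) := by gcongr
        _ = c' * (‖q‖ * ‖X‖) := by ring
        _ ≤ c' * (K^2 / c0) := by gcongr
        _ = 1/2 := by rw [hc']; field_simp
    rw [e]
    have := norm_sub_norm_le (1:ℂ) (q * N X)
    rw [norm_one] at this
    linarith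
  have hNν0 : N ν' ≠ 0 := norm_pos_iff.1 (by linarith)
  have hνn : ‖ν'‖ ≤ Cn := by
    refine (norm_sub_le _ _).trans ?_
    rw [norm_smul, hCn]; linarith
  set c : ℂ := - (β / 6) / ((2 * Hf B X : ℝ) : ℂ) with hc
  have hcn : ‖c‖ ≤ Cc * ‖X‖ := by
    rw [hc, norm_div, norm_neg, norm_div, Complex.norm_real, Real.norm_eq_abs, abs_of_pos (by positivity : 0 < 2 * Hf B X), div_le_iff₀ (by positivity), hCc]
    norm_num
    calc ‖β‖ / 6 ≤ 6 * K * ‖X‖^3 / 6 := by gcongr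
      _ = K / (2 * c0) * ‖X‖ * (2 * (c0 * ‖X‖^2)) := by field_simp
      _ ≤ K / (2 * c0) * ‖X‖ * (2 * Hf B X) := by gcongr
  set y : ℂ := (gam B X X / 4 - c * N X) / N ν' with hy
  have hyn : ‖y‖ ≤ Cy * ‖X‖^2 := by
    rw [hy, norm_div, div_le_iff₀ (by linarith)]
    have h1 : ‖gam B X X / 4 - c * N X‖ ≤ K / 2 * ‖X‖^2 + Cc * c' * ‖X‖^2 := by
      refine (norm_sub_le _ _).trans ?_
      have := gam_le hBK X X
      have h2 : ‖c * N X‖ ≤ (Cc * ‖X‖) * (c' * ‖X‖) := by rw [norm_mul]; gcongr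
      have h3 : ‖gam B X X / 4‖ = ‖gam B X X‖ / 4 := by rw [norm_div]; norm_num
      rw [h3]
      have h5 : 2 * K * ‖X‖ * ‖X‖ = 4 * (K / 2 * ‖X‖^2) := by ring
      have h6 : Cc * ‖X‖ * (c' * ‖X‖) = Cc * c' * ‖X‖^2 := by ring
      linarith
    have h4 : Cy * ‖X‖^2 * (1/2) ≤ Cy * ‖X‖^2 * ‖N ν'‖ := by gcongr
    have h5 : Cy * ‖X‖^2 * (1/2) = K / 2 * ‖X‖^2 + Cc * c' * ‖X‖^2 := by rw [hCy]; ring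
    linarith
  set Y := c • X + y • ν' with hYd
  have hYn : ‖Y‖ ≤ CY * ‖X‖^2 := by
    rw [hYd]
    refine (norm_add_le _ _).trans ?_
    rw [norm_smul, norm_smul]
    have h1 : ‖c‖ * ‖X‖ ≤ Cc * ‖X‖ * ‖X‖ := by gcongr
    have h2 : ‖y‖ * ‖ν'‖ ≤ Cy * ‖X‖^2 * Cn := by gcongr
    have h3 : CY * ‖X‖^2 = Cc * ‖X‖ * ‖X‖ + Cy * ‖X‖^2 * Cn := by rw [hCY]; ring
    linarith
  have hNY : N Y = gam B X X / 4 := by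
    rw [hYd, map_add, map_smul, map_smul, smul_eq_mul, smul_eq_mul, hy]; field_simp; ring
  have hhY : hh B X Y = - (β / 6) := by
    rw [hYd, hh_add, hh_smul, hh_smul, hhν', hh_self B hB, hc]; field_simp; simp
  set Z := ((gam B X Y + α / 6) / 2) • ν with hZd
  have hNZ : N Z = (gam B X Y + α / 6) / 2 := by rw [hZd, map_smul, hN]; simp
  have hZn : ‖Z‖ ≤ CZ * ‖X‖^3 := by
    rw [hZd, norm_smul, norm_div]
    have h1 := gam_le hBK X Y
    have h2 : ‖gam B X Y + α / 6‖ ≤ 2 * K * ‖X‖ * (CY * ‖X‖^2) + 3 * K * ‖X‖^3 / 6 := by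
      refine (norm_add_le _ _).trans ?_
      refine add_le_add (h1.trans (by gcongr)) ?_
      rw [norm_div]; norm_num; linarith
    norm_num
    calc ‖gam B X Y + α / 6‖ / 2 * ‖ν‖ ≤ (2 * K * ‖X‖ * (CY * ‖X‖^2) + 3 * K * ‖X‖^3 / 6) / 2 * K := by gcongr
      _ ≤ CZ * ‖X‖^3 := by
        have h3 : 0 ≤ K * K * ‖X‖^3 := by positivity
        have h4 : CZ * ‖X‖^3 = (2 * K * ‖X‖ * (CY * ‖X‖^2) + 3 * K * ‖X‖^3 / 6) / 2 * K + 3/4 * (K * K * ‖X‖^3) := by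
          rw [hCZ]; ring
        linarith
  refine ⟨Y, Z, hYn.trans ?_, hZn.trans ?_, fun l hl => ?_⟩
  · gcongr; linarith
  · gcongr; linarith
  set a := ‖l‖ * ‖X‖ with ha
  have ha0 : 0 ≤ a := by positivity
  have n1 : ‖l • X‖ = a := norm_smul _ _
  have n2 : ‖l^2 • Y‖ ≤ CY * a^2 := by
    rw [norm_smul, norm_pow, ha, mul_pow]
    exact (mul_le_mul_of_nonneg_left hYn (sq_nonneg ‖l‖)).trans_eq (by ring)
  have n3 : ‖l^3 • Z‖ ≤ CZ * a^3 := by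
    rw [norm_smul, norm_pow, ha, mul_pow]
    exact (mul_le_mul_of_nonneg_left hZn (pow_nonneg (norm_nonneg l) 3)).trans_eq (by ring)
  have n4 : ‖l^2 • Y + l^3 • Z‖ ≤ D * a^2 := by
    refine (norm_add_le _ _).trans ?_
    have : a^3 ≤ a^2 := pow_le_pow_of_le_one ha0 hl (by norm_num)
    have h2 : CZ * a^3 ≤ CZ * a^2 := by gcongr
    have h3 : D * a^2 = CY * a^2 + CZ * a^2 := by rw [hD]; ring
    linarith
  have hR := Tdiff hTK hK0.le (by positivity : 0 ≤ D) n1.le n4 hl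
  rw [← add_assoc, abs_le] at hR
  set R := l^2 • Y + l^3 • Z with hRd
  have e1 : B (l • X + l^2 • Y + l^3 • Z) (l • X + l^2 • Y + l^3 • Z) = B (l • X) (l • X) + 2 * B (l • X) (l^2 • Y)
      + 2 * B (l • X) (l^3 • Z) + B R R := by
    simp only [hRd, map_add, add_apply, hB (l^2 • Y) (l • X), hB (l^3 • Z) (l • X)]; ring
  have e2 : N (l • X + l^2 • Y + l^3 • Z) = l * N X + gam B X X * l^2 / ((4:ℝ):ℂ) + (gam B X Y * l^3) / ((2:ℝ):ℂ) + α * l^3 / ((12:ℝ) : ℂ) := by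
    rw [map_add, map_add, map_smul, map_smul, map_smul, hNY, hNZ, smul_eq_mul, smul_eq_mul, smul_eq_mul]
    push_cast; ring
  have e3 : B (l • X) (l^2 • Y) = (gam B X Y * l^3).re - (β * (star l * l^2)).re / 6 := by
    rw [bil, hhY, show l * l^2 = l^3 by ring, show -(β/6) * (star l * l^2) = - (β * (star l * l^2) / ((6:ℝ):ℂ)) by push_cast; ring,
      Complex.neg_re, Complex.div_ofReal_re]; ring
  have b1 : B (l • X) (l^3 • Z) ≤ K * a * (CZ * a^3) := by
    refine (le_abs_self _).trans ((Bb hBK _ _).trans ?_)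
    rw [n1]; gcongr
  have b2 : B R R ≤ K * (D * a^2) * (D * a^2) := by
    refine (le_abs_self _).trans ((Bb hBK _ _).trans ?_)
    gcongr
  have hT' := hT l
  rw [e1, e2, e3, bil_diag B hB, Complex.add_re, Complex.add_re, Complex.add_re, Complex.div_ofReal_re, Complex.div_ofReal_re, Complex.div_ofReal_re]
  have b5 : 0 ≤ D * a^4 := by positivity
  have b6 : 0 ≤ K * D^2 * a^4 := by positivity
  have b7 : 0 ≤ 3 * K * D * (1 + D)^2 * a^4 := by positivity
  have b8 : K * a * (CZ * a^3) ≤ K * D * a^4 := by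
    have : CZ ≤ D := by linarith
    calc K * a * (CZ * a^3) = K * CZ * a^4 := by ring
      _ ≤ K * D * a^4 := by gcongr
  have b9 : C * a^4 = D * a^4 + K * D * a^4 + K * D^2 * a^4 + 3 * K * D * (1 + D)^2 * a^4 := by rw [hC]; ring
  have b10 : K * (D * a^2) * (D * a^2) = K * D^2 * a^4 := by ring
  linarith

end Alg2

theorem FIN1 {δ e c0 x H : ℝ} {N : ℂ} {t : ℝ} {ξ : ℂ} (hδ : 0 < δ) (he0 : 0 < e) (he1 : e ≤ 1)
    (hc0 : 0 < c0) (hc1 : c0 ≤ 1) (hx : 0 ≤ x) (hH : c0 * x^2 ≤ H) (hn : ‖N‖^2 / δ^2 + H / δ = 1) (ht0 : 0 < t)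
    (hξ : ‖ξ‖ ≤ 1 - t) :
    1 - N / δ * ξ ≠ 0 ∧ ∃ m > 0, 
      m^2 * δ * t ≤ δ + 2 * ((ξ / (1 - N / δ * ξ)) * N).re - ‖ξ / (1 - N / δ * ξ)‖^2 * H ∧
      (‖ξ / (1 - N / δ * ξ)‖ * x)^2 ≤ 2 * δ / (c0 * t) ∧
      (‖ξ / (1 - N / δ * ξ)‖ * x)^2 * ((‖ξ / (1 - N / δ * ξ)‖ * x)^2)^e ≤ 4 / c0^2 * (m^2 * δ * δ^e) ∧
      ‖ξ / (1 - N / δ * ξ)‖^3 * x^2 * ‖N‖ ≤ 2 / c0 * (m^2 * δ * δ) := by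
  set u : ℂ := N / δ with hu
  have hδc : (δ : ℂ) ≠ 0 := by exact_mod_cast hδ.ne'
  have hNu : N = δ * u := by rw [hu]; field_simp
  have hun : ‖N‖ = δ * ‖u‖ := by rw [hNu, norm_mul, Complex.norm_real, Real.norm_eq_abs, abs_of_pos hδ]
  set h := H / δ with hh
  have hHh : H = δ * h := by rw [hh]; field_simp
  have hH0 : 0 ≤ H := le_trans (by positivity) hH
  have hh0 : 0 ≤ h := by positivity
  have hn' : ‖u‖^2 + h = 1 := by
    rw [← hn, hun]; congr 1; field_simp
  have hu1 : ‖u‖ ≤ 1 := by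
    have := norm_nonneg u; nlinarith
  have hh1 : h ≤ 1 := by nlinarith [sq_nonneg ‖u‖]
  have hξ1 : ‖ξ‖ ≤ 1 := by linarith
  have huξ : ‖u * ξ‖ ≤ ‖u‖ * (1 - t) := by rw [norm_mul]; gcongr
  have hg1 : t ≤ ‖1 - u * ξ‖ := by
    have := norm_sub_norm_le (1:ℂ) (u * ξ)
    rw [norm_one] at this
    have : ‖u‖ * (1 - t) ≤ 1 * (1 - t) := by
      apply mul_le_mul_of_nonneg_right hu1; linarith [norm_nonneg ξ]
    linarith
  have hg2 : 1 - ‖u‖ ≤ ‖1 - u * ξ‖ := by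
    have := norm_sub_norm_le (1:ℂ) (u * ξ)
    rw [norm_one] at this
    have : ‖u‖ * (1 - t) ≤ ‖u‖ := by nlinarith [norm_nonneg u]
    linarith
  have hgp : 0 < ‖1 - u * ξ‖ := lt_of_lt_of_le ht0 hg1
  have hne : 1 - u * ξ ≠ 0 := norm_pos_iff.1 hgp
  set l := ξ / (1 - u * ξ) with hl
  set m := 1 / ‖1 - u * ξ‖ with hm
  have hmp : 0 < m := by positivity
  have hln : ‖l‖ = ‖ξ‖ * m := by rw [hl, norm_div, hm]; ring
  have hlm : ‖l‖ ≤ m := by rw [hln]; exact mul_le_of_le_one_left hmp.le hξ1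
  have hmt : m ≤ 1 / t := by rw [hm]; gcongr
  have hmh : m * h ≤ 2 := by
    rw [hm, div_mul_eq_mul_div, div_le_iff₀ hgp]
    have : h = (1 - ‖u‖) * (1 + ‖u‖) := by linarith
    nlinarith [norm_nonneg u]
  have hx2 : x^2 ≤ δ * h / c0 := by rw [le_div_iff₀ hc0, ← hHh]; linarith
  set a := ‖l‖ * x with ha
  have ha2 : a^2 ≤ m^2 * (δ * h / c0) := by
    rw [ha, mul_pow]; gcongr
  refine ⟨hne, m, hmp, ?_, ?_, ?_, ?_⟩
  · have k1 : 1 + u * l = 1 / (1 - u * ξ) := by rw [hl]; field_simp; ring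
    have k2 : ‖1 + u * l‖ = m := by rw [k1, norm_div, norm_one]
    have k3 : ‖1 + u * l‖^2 = 1 + 2 * (u * l).re + ‖u‖^2 * ‖l‖^2 := by
      rw [← mul_pow, ← norm_mul, Complex.sq_norm, Complex.sq_norm, Complex.normSq_apply, Complex.normSq_apply]
      simp only [Complex.add_re, Complex.add_im, Complex.one_re, Complex.one_im]
      ring
    have k4 : (l * N).re = δ * (u * l).re := by
      rw [hNu, show l * (δ * u) = (δ:ℂ) * (u * l) by ring, Complex.re_ofReal_mul]
    rw [k4, hHh, hln]
    rw [k2, hln] at k3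
    have e1 : δ + 2 * (δ * (u * l).re) - (‖ξ‖ * m)^2 * (δ * h) = δ * (m^2 * (1 - ‖ξ‖^2)) := by
      have : h = 1 - ‖u‖^2 := by linarith
      rw [this]
      linear_combination (-δ) * k3
    rw [e1]
    have : t ≤ 1 - ‖ξ‖^2 := by nlinarith [norm_nonneg ξ]
    calc m^2 * δ * t ≤ m^2 * δ * (1 - ‖ξ‖^2) := by gcongr
      _ = _ := by ring
  · refine ha2.trans ?_
    calc m^2 * (δ * h / c0) = m * (m * h) * δ / c0 := by ring
      _ ≤ (1/t) * 2 * δ / c0 := by gcongr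
      _ = 2 * δ / (c0 * t) := by field_simp
  · have q1 : h ≤ h^e := by
      calc h = h^(1:ℝ) := (Real.rpow_one h).symm
        _ ≤ h^e := Real.rpow_le_rpow_of_exponent_ge' hh0 hh1 he0.le he1
    have q2 : h * (m^2 * h)^e ≤ 4 := by
      calc h * (m^2 * h)^e ≤ h^e * (m^2*h)^e := by gcongr
        _ = ((m * h)^2)^e := by rw [← Real.mul_rpow hh0 (by positivity)]; ring_nf
        _ ≤ (2^2)^e := by gcongr
        _ ≤ (2^2 : ℝ)^(1:ℝ) := Real.rpow_le_rpow_of_exponent_le (by norm_num) he1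
        _ = 4 := by norm_num
    have q3 : (δ / c0)^e ≤ δ^e / c0 := by
      rw [Real.div_rpow hδ.le hc0.le]
      gcongr
      calc c0 = c0^(1:ℝ) := (Real.rpow_one _).symm
        _ ≤ c0^e := Real.rpow_le_rpow_of_exponent_ge' hc0.le hc1 he0.le he1
    calc a^2 * (a^2)^e ≤ (m^2 * (δ * h / c0)) * (m^2 * (δ * h / c0))^e := by gcongr
      _ = (m^2 * δ / c0) * (h * (m^2 * h)^e) * (δ / c0)^e := by
          rw [show m^2 * (δ * h / c0) = (m^2 * h) * (δ / c0) by ring, Real.mul_rpow (by positivity) (by positivity)]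
          ring
      _ ≤ (m^2 * δ / c0) * 4 * (δ^e / c0) := by gcongr
      _ = _ := by ring
  · rw [hun]
    calc ‖l‖^3 * x^2 * (δ * ‖u‖) ≤ m^3 * (δ * h / c0) * (δ * 1) := by gcongr
      _ = m^2 * δ * (m * h) * δ / c0 := by ring
      _ ≤ m^2 * δ * 2 * δ / c0 := by gcongr
      _ = _ := by ring

theorem FIN (e c0 C η : ℝ) (he0 : 0 < e) (he1 : e ≤ 1) (hc0 : 0 < c0) (hc1 : c0 ≤ 1) (hC : 0 ≤ C) (hη : 0 < η) :
    ∃ K > 0, ∀ δ : ℝ, 0 < δ → δ ≤ 1 → ∀ x H : ℝ, ∀ N ξ : ℂ, 0 ≤ x → c0 * x^2 ≤ H → ‖N‖^2 / δ^2 + H / δ = 1 →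
      ‖ξ‖ ≤ 1 - K * δ^e → 
      1 - N / δ * ξ ≠ 0 ∧ ‖ξ / (1 - N / δ * ξ)‖ * x ≤ η ∧ 
      0 < δ + 2 * ((ξ / (1 - N / δ * ξ)) * N).re - ‖ξ / (1 - N / δ * ξ)‖^2 * H
       - C * ((‖ξ / (1 - N / δ * ξ)‖ * x)^2 * ((‖ξ / (1 - N / δ * ξ)‖ * x)^2)^e)
       - C * (‖ξ / (1 - N / δ * ξ)‖^3 * x^2 * ‖N‖) := by
  set K := 2 / (c0 * η^2) + C * (4 / c0^2) + C * (2 / c0) + 1 with hK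
  have hKp : 0 < K := by positivity
  refine ⟨K, hKp, fun δ hδ hδ1 x H N ξ hx hH hn hξ => ?_⟩
  have hde : 0 < δ^e := by positivity
  obtain ⟨h1, m, hm, h2, h3, h4, h5⟩ := FIN1 hδ he0 he1 hc0 hc1 hx hH hn (by positivity : 0 < K * δ^e) hξ
  have hdd : δ ≤ δ^e := by
    calc δ = δ^(1:ℝ) := (Real.rpow_one _).symm
      _ ≤ δ^e := Real.rpow_le_rpow_of_exponent_ge' hδ.le hδ1 he0.le he1
  refine ⟨h1, ?_, ?_⟩
  · refine le_of_sq_le_sq ?_ hη.le |> fun h => h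
    refine h3.trans ?_
    rw [div_le_iff₀ (by positivity)]
    have k1 : 2 / (c0 * η^2) ≤ K := by
      have : 0 ≤ C * (4 / c0^2) + C * (2 / c0) + 1 := by positivity
      linarith
    rw [div_le_iff₀ (by positivity)] at k1
    calc 2 * δ ≤ (K * (c0 * η^2)) * δ^e := by gcongr
      _ = _ := by ring
  · have k1 : 2 / c0 * (m^2 * δ * δ) ≤ 2 / c0 * (m^2 * δ * δ^e) := by gcongr
    have k2 := mul_le_mul_of_nonneg_left h4 hC
    have k3 := mul_le_mul_of_nonneg_left (h5.trans k1) hC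
    have k4 : 0 < m^2 * δ * δ^e := by positivity
    have k5 : 0 < 2 / (c0 * η^2) * (m^2 * δ * δ^e) := by positivity
    have k6 : m^2 * δ * (K * δ^e) = 2 / (c0 * η^2) * (m^2 * δ * δ^e) + C * (4 / c0^2 * (m^2 * δ * δ^e)) + C * (2 / c0 * (m^2 * δ * δ^e)) + m^2 * δ * δ^e := by
      rw [hK]; ring
    linarith

section Gen
set_option maxSynthPendingDepth 5
variable {E : Type} [NormedAddCommGroup E] [NormedSpace ℝ E]

theorem genC (a : ℝ) (J : E →L[ℝ] E) {p : E} {B : E → (E →L[ℝ] E →L[ℝ] ℝ)} {A : E → (E →L[ℝ] ℝ)}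
    (c2 : ContinuousAt B p) (c1 : ContinuousAt A p) {r : ℝ} (hr : 0 < r) :
    ∀ᶠ z in 𝓝 p, ‖(B z + (a/2) • ((A z).smulRight (A z) + (A z ∘L J).smulRight (A z ∘L J)))
      - (B p + (a/2) • ((A p).smulRight (A p) + (A p ∘L J).smulRight (A p ∘L J)))‖ < r := by
  have e1 : Continuous (fun x : (E →L[ℝ] ℝ) × (E →L[ℝ] ℝ) => x.1.smulRight x.2) :=
    (ContinuousLinearMap.smulRightL ℝ E (E →L[ℝ] ℝ)).continuous₂
  have e2 : Continuous (fun x : (E →L[ℝ] ℝ) => x ∘L J) := by fun_prop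
  have e : Continuous (fun x : (E →L[ℝ] E →L[ℝ] ℝ) × (E →L[ℝ] ℝ) => x.1 + (a/2) • (x.2.smulRight x.2 + (x.2 ∘L J).smulRight (x.2 ∘L J))) :=
    by
    have g1 : Continuous (fun x : (E →L[ℝ] E →L[ℝ] ℝ) × (E →L[ℝ] ℝ) => x.2.smulRight x.2) :=
      e1.comp (continuous_snd.prodMk continuous_snd)
    have g2 : Continuous (fun x : (E →L[ℝ] E →L[ℝ] ℝ) × (E →L[ℝ] ℝ) => (x.2 ∘L J).smulRight (x.2 ∘L J)) :=
      e1.comp ((e2.comp continuous_snd).prodMk (e2.comp continuous_snd))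
    exact continuous_fst.add ((g1.fun_add g2).const_smul (a/2))
  have c3 := e.continuousAt.comp (x := p) (f := fun z => (B z, A z)) (c2.prodMk c1)
  have := (Metric.tendsto_nhds.1 c3) r hr
  filter_upwards [this] with z hz
  rwa [dist_eq_norm] at hz

theorem genN (x y : E →L[ℝ] E →L[ℝ] ℝ) : ‖x‖ ≤ ‖y‖ + ‖x - y‖ := by
  have := norm_add_le y (x - y)
  rwa [add_sub_cancel] at this
end Gen

section Lev
variable {E : Type} [NormedAddCommGroup E] [NormedSpace ℂ E] [NormedSpace ℝ E] [IsScalarTower ℝ ℂ E]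

theorem Ism (a : ℝ) (X : E) : Complex.I • (a • X) = a • (Complex.I • X) := by
  have h : ∀ a : ℝ, ∀ Y : E, a • Y = (a : ℂ) • Y := fun a Y => by
    rw [← Complex.coe_algebraMap, algebraMap_smul]
  rw [h, h, smul_comm]

/-- multiplication by `i` -/
def JJ : E →L[ℝ] E := LinearMap.mkContinuous
  { toFun := fun X => Complex.I • X
    map_add' := fun X Y => smul_add _ X Y
    map_smul' := fun a X => Ism a X } 1 (fun X => by simp [nI])

theorem JJ_apply (X : E) : (JJ : E →L[ℝ] E) X = Complex.I • X := rfl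

/-- the complex linear form -/
def NN (A : E →L[ℝ] ℝ) : E →ₗ[ℂ] ℂ where
  toFun w := (-((A w : ℝ) : ℂ) + Complex.I * ((A (Complex.I • w) : ℝ) : ℂ)) / 2
  map_add' X Y := by
    simp only [smul_add, map_add, Complex.ofReal_add]; ring
  map_smul' l X := by
    have e : Complex.I • (l • X) = l.re • (Complex.I • X) - l.im • X := by
      rw [smul_comm, csm l (Complex.I • X), II, smul_neg, sub_eq_add_neg]
    rw [e, csm l X]
    simp only [map_add, map_sub, map_smul, smul_eq_mul, RingHom.id_apply]
    apply Complex.ext <;> simp <;> ring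

theorem NN_apply (A : E →L[ℝ] ℝ) (w : E) :
    NN A w = (-((A w : ℝ) : ℂ) + Complex.I * ((A (Complex.I • w) : ℝ) : ℂ)) / 2 := rfl

theorem NN_re (A : E →L[ℝ] ℝ) (w : E) : 2 * (NN A w).re = - A w := by
  rw [NN_apply]; simp; ring

theorem NN_sq (A : E →L[ℝ] ℝ) (w : E) : ‖NN A w‖^2 = (A w ^2 + A (Complex.I • w)^2) / 4 := by
  rw [NN_apply, Complex.sq_norm, Complex.normSq_apply]; simp; ring

theorem NN_I (A : E →L[ℝ] ℝ) (w : E) : ‖NN A (Complex.I • w)‖ = ‖NN A w‖ := by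
  rw [map_smul, norm_smul, Complex.norm_I, one_mul]

/-- corrected Hessian -/
def Bt (a : ℝ) (B : E →L[ℝ] E →L[ℝ] ℝ) (A : E →L[ℝ] ℝ) : E →L[ℝ] E →L[ℝ] ℝ :=
  B + (a/2) • (A.smulRight A + (A ∘L JJ).smulRight (A ∘L JJ))

theorem Bt_apply (a : ℝ) (B : E →L[ℝ] E →L[ℝ] ℝ) (A : E →L[ℝ] ℝ) (v w : E) :
    Bt a B A v w = B v w + (a/2) * (A v * A w + A (Complex.I • v) * A (Complex.I • w)) := by
  simp [Bt, JJ_apply]; ring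

theorem Bt_diag (a : ℝ) (B : E →L[ℝ] E →L[ℝ] ℝ) (A : E →L[ℝ] ℝ) (v : E) :
    Bt a B A v v = B v v + 2 * a * ‖NN A v‖^2 := by
  rw [Bt_apply, NN_sq]; ring

theorem Bt_Hf (a : ℝ) (B : E →L[ℝ] E →L[ℝ] ℝ) (A : E →L[ℝ] ℝ) (v : E) :
    Hf (Bt a B A) v = Hf B v + a * ‖NN A v‖^2 := by
  rw [Hf, Bt_diag, Bt_diag, NN_I, Hf]; ring

theorem Hf_sub (B B' : E →L[ℝ] E →L[ℝ] ℝ) (v : E) : |Hf B v - Hf B' v| ≤ ‖B - B'‖ * ‖v‖^2 := by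
  have h1 := abs_le.1 (Bb (le_refl ‖B - B'‖) v v)
  have h2 := abs_le.1 (Bb (le_refl ‖B - B'‖) (Complex.I • v) (Complex.I • v))
  rw [nI] at h2
  simp only [sub_apply] at h1 h2
  have : 0 ≤ ‖B - B'‖ * ‖v‖^2 := by positivity
  have e : ‖B - B'‖ * ‖v‖ * ‖v‖ = ‖B - B'‖ * ‖v‖^2 := by ring
  rw [e] at h1 h2
  rw [abs_le]; simp only [Hf]
  constructor <;> linarith

theorem Hf_smul (B : E →L[ℝ] E →L[ℝ] ℝ) (t : ℝ) (v : E) : Hf B (t • v) = t^2 * Hf B v := by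
  simp only [Hf, Ism, map_smul, smul_apply, smul_eq_mul]; ring

theorem Hf_cont (B : E →L[ℝ] E →L[ℝ] ℝ) : Continuous (Hf B) := by
  have : Hf B = fun v => (B v v + B (JJ v) (JJ v)) / 4 := rfl
  rw [this]; fun_prop

theorem NN_cont (A : E →L[ℝ] ℝ) : Continuous (fun v => ‖NN A v‖^2) := by
  have : (fun v => ‖NN A v‖^2) = fun v => (A v ^2 + A (JJ v)^2) / 4 := by
    ext v; rw [NN_sq]; rfl
  rw [this]; fun_prop

theorem cpt [FiniteDimensional ℝ E] (B : E →L[ℝ] E →L[ℝ] ℝ) (A : E →L[ℝ] ℝ)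
    (h : ∀ X : E, X ≠ 0 → NN A X = 0 → 0 < Hf B X) :
    ∃ a ≥ 0, ∃ c > 0, c ≤ 1 ∧ ∀ X, 2 * c * ‖X‖^2 ≤ Hf (Bt a B A) X := by
  haveI : ProperSpace E := FiniteDimensional.proper ℝ E
  have hK : IsCompact (sphere (0:E) 1) := isCompact_sphere _ _
  have hc1 := Hf_cont B
  have hc2 := NN_cont A
  obtain ⟨m, hm⟩ := hK.elim_directed_cover (fun m : ℕ => {X | 1 / ((m:ℝ)+1) < Hf B X + m * ‖NN A X‖^2})
    (fun m => isOpen_lt (by fun_prop) (by fun_prop)) (by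
      intro X hX
      have hX0 : X ≠ 0 := by
        rintro rfl; simp at hX
      rw [mem_iUnion]
      by_cases h0 : NN A X = 0
      · obtain ⟨m, hm⟩ := exists_nat_one_div_lt (h X hX0 h0)
        refine ⟨m, ?_⟩
        show 1 / ((m:ℝ)+1) < Hf B X + m * ‖NN A X‖^2
        rw [h0]; simpa using hm
      · have hp : 0 < ‖NN A X‖^2 := by positivity
        obtain ⟨m, hm⟩ := exists_nat_gt ((1 - Hf B X) / ‖NN A X‖^2)
        refine ⟨m, ?_⟩
        show 1 / ((m:ℝ)+1) < Hf B X + m * ‖NN A X‖^2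
        rw [div_lt_iff₀ hp] at hm
        have : 1 / ((m:ℝ)+1) ≤ 1 := by
          rw [div_le_one (by positivity)]; linarith [(Nat.cast_nonneg m : (0:ℝ) ≤ m)]
        linarith) (by
      apply directed_of_isDirected_le
      intro i j hij X hX
      have hX' : 1 / ((i:ℝ)+1) < Hf B X + i * ‖NN A X‖^2 := hX
      show 1 / ((j:ℝ)+1) < Hf B X + j * ‖NN A X‖^2
      have hij' : (i:ℝ) ≤ j := by exact_mod_cast hij
      have e1 : 1 / ((j:ℝ)+1) ≤ 1 / ((i:ℝ)+1) := by gcongr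
      have e2 : i * ‖NN A X‖^2 ≤ j * ‖NN A X‖^2 := by gcongr
      linarith)
  refine ⟨m, by positivity, 1 / (2 * ((m:ℝ)+1)), by positivity, ?_, fun X => ?_⟩
  · rw [div_le_one (by positivity)]; linarith [(Nat.cast_nonneg m : (0:ℝ) ≤ m)]
  · by_cases hX : X = 0
    · subst hX; simp [Hf]
    have hn : ‖X‖ ≠ 0 := norm_ne_zero_iff.2 hX
    have hs : ‖X‖⁻¹ • X ∈ sphere (0:E) 1 := by
      rw [mem_sphere_zero_iff_norm, norm_smul, norm_inv, norm_norm]; field_simp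
    have h1 : 1 / ((m:ℝ)+1) < Hf B (‖X‖⁻¹ • X) + m * ‖NN A (‖X‖⁻¹ • X)‖^2 := hm hs
    rw [← Bt_Hf, Hf_smul] at h1
    have h2 : 0 < ‖X‖^2 := by positivity
    rw [inv_pow, inv_mul_eq_div, lt_div_iff₀ h2] at h1
    have : 2 * (1 / (2 * ((m:ℝ)+1))) = 1 / ((m:ℝ)+1) := by field_simp
    rw [this]; exact h1.le

theorem DAT [FiniteDimensional ℝ E] {ε : ℝ} (h0 : 0 < ε) {p : E} {d : E → ℝ} (hd : HC ε p 2 ℝ d)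
    (hne : fderiv ℝ d p ≠ 0)
    (h : ∀ X : E, X ≠ 0 → NN (fderiv ℝ d p) X = 0 → 0 < Hf (fderiv ℝ (fderiv ℝ d) p) X) :
    ∃ a ≥ 0, ∃ c > 0, c ≤ 1 ∧ ∃ K ≥ 1, ∀ᶠ z in 𝓝 p,
      (∀ v w, fderiv ℝ (fderiv ℝ d) z v w = fderiv ℝ (fderiv ℝ d) z w v) ∧
      ‖Bt a (fderiv ℝ (fderiv ℝ d) z) (fderiv ℝ d z)‖ ≤ K ∧
      (∀ X, c * ‖X‖^2 ≤ Hf (Bt a (fderiv ℝ (fderiv ℝ d) z) (fderiv ℝ d z)) X) ∧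
      ∃ ν, NN (fderiv ℝ d z) ν = 1 ∧ ‖ν‖ ≤ K := by
  obtain ⟨a, ha, c, hc, hc1, H⟩ := cpt _ _ h
  have c1 : ContinuousAt (fderiv ℝ d) p := HC.continuousAt h0 hd.2
  have c2 : ContinuousAt (fderiv ℝ (fderiv ℝ d)) p := HC.continuousAt h0 hd.2.2
  set b : E → (E →L[ℝ] E →L[ℝ] ℝ) := fun z => Bt a (fderiv ℝ (fderiv ℝ d) z) (fderiv ℝ d z) with hb
  obtain ⟨w, hw⟩ : ∃ w, fderiv ℝ d p w ≠ 0 := by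
    by_contra! hh
    exact hne (by ext w; simpa using hh w)
  have hNw : NN (fderiv ℝ d p) w ≠ 0 := by
    intro hh
    have := NN_re (fderiv ℝ d p) w
    rw [hh] at this; simp at this; exact hw this
  set q := ‖NN (fderiv ℝ d p) w‖ with hq
  have hqp : 0 < q := norm_pos_iff.2 hNw
  have c4 : ContinuousAt (fun z => ‖NN (fderiv ℝ d z) w‖) p := by
    have f1 : ContinuousAt (fun z => fderiv ℝ d z w) p := c1.clm_apply continuousAt_const
    have f2 : ContinuousAt (fun z => fderiv ℝ d z (Complex.I • w)) p := c1.clm_apply continuousAt_const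
    have : (fun z => ‖NN (fderiv ℝ d z) w‖) = fun z => ‖(-((fderiv ℝ d z w : ℝ) : ℂ) + Complex.I * ((fderiv ℝ d z (Complex.I • w) : ℝ) : ℂ)) / 2‖ := rfl
    rw [this]
    refine ContinuousAt.norm (ContinuousAt.div_const (ContinuousAt.add (ContinuousAt.neg ?_) (ContinuousAt.mul continuousAt_const ?_)) _)
    · exact Complex.continuous_ofReal.continuousAt.comp f1
    · exact Complex.continuous_ofReal.continuousAt.comp f2
  refine ⟨a, ha, c, hc, hc1, max 1 (max (‖b p‖ + 1) (2 * ‖w‖ / q)), le_max_left _ _, ?_⟩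
  have s1 : ∀ᶠ z in 𝓝 p, ContDiffAt ℝ 2 d z := by
    have := HC.contDiffAt h0 hd
    exact ContDiffAt.eventually (by exact_mod_cast this) (by simp)
  have s2 : ∀ᶠ z in 𝓝 p, ‖b z - b p‖ < min 1 c := by
    exact genC a JJ c2 c1 (r := min 1 c) (by simp [hc])
  have s3 : ∀ᶠ z in 𝓝 p, q / 2 < ‖NN (fderiv ℝ d z) w‖ :=
    (continuousAt_const (y := q/2)).eventually_lt c4 (by simp only [← hq]; linarith)
  filter_upwards [s1, s2, s3] with z z1 z2 z3
  refine ⟨?_, ?_, fun X => ?_, ?_⟩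
  · have := z1.isSymmSndFDerivAt (by simp)
    exact fun v w => this v w
  · refine le_trans ?_ (le_max_of_le_right (le_max_left _ _))
    have : ‖b z‖ ≤ ‖b p‖ + ‖b z - b p‖ := genN _ _
    have := z2.trans_le (min_le_left _ _)
    show ‖b z‖ ≤ _
    linarith
  · have e1 := (abs_le.1 (Hf_sub (b z) (b p) X)).1
    have e2 : ‖b z - b p‖ * ‖X‖^2 ≤ c * ‖X‖^2 := by
      gcongr; exact (z2.trans_le (min_le_right _ _)).le
    have e3 : 2 * c * ‖X‖^2 ≤ Hf (b p) X := H X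
    show c * ‖X‖^2 ≤ Hf (b z) X
    linarith
  · have hz0 : NN (fderiv ℝ d z) w ≠ 0 := by
      rw [← norm_pos_iff]; linarith
    refine ⟨(NN (fderiv ℝ d z) w)⁻¹ • w, ?_, ?_⟩
    · rw [map_smul, smul_eq_mul, inv_mul_cancel₀ hz0]
    · refine le_trans ?_ (le_max_of_le_right (le_max_right _ _))
      rw [norm_smul, norm_inv, inv_mul_eq_div]
      calc ‖w‖ / ‖NN (fderiv ℝ d z) w‖ ≤ ‖w‖ / (q/2) := by gcongr
        _ = _ := by field_simp
end Lev

section Gen2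
set_option maxSynthPendingDepth 5
variable {E : Type} [NormedAddCommGroup E] [NormedSpace ℝ E]

theorem genT {ε : ℝ} (h0 : 0 < ε) {p : E} {d : E → ℝ} (hd : HC ε p 3 ℝ d) :
    ∃ K ≥ 0, ∀ᶠ z in 𝓝 p, ∀ X Y Z, |fderiv ℝ (fderiv ℝ (fderiv ℝ d)) z X Y Z| ≤ K * ‖X‖ * ‖Y‖ * ‖Z‖ := by
  have c3 : ContinuousAt (fderiv ℝ (fderiv ℝ (fderiv ℝ d))) p := HC.continuousAt h0 hd.2.2.2
  refine ⟨‖fderiv ℝ (fderiv ℝ (fderiv ℝ d)) p‖ + 1, by positivity, ?_⟩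
  have := c3.norm.eventually_lt (continuousAt_const (y := ‖fderiv ℝ (fderiv ℝ (fderiv ℝ d)) p‖ + 1)) (by linarith)
  filter_upwards [this] with z hz X Y Z
  set T := fderiv ℝ (fderiv ℝ (fderiv ℝ d)) z
  have e1 : ‖T X‖ ≤ (‖fderiv ℝ (fderiv ℝ (fderiv ℝ d)) p‖ + 1) * ‖X‖ := (T.le_opNorm X).trans (by gcongr)
  have e2 := (T X).le_opNorm₂ Y Z
  rw [Real.norm_eq_abs] at e2
  refine e2.trans ?_
  gcongr
end Gen2

theorem rp2 {a : ℝ} (ha : 0 ≤ a) (s : ℝ) : (a^2)^(s/2) = a^s := by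
  rw [← Real.rpow_natCast, ← Real.rpow_mul ha]; congr 1; push_cast; ring

theorem er {C D a b ε : ℝ} (hC : 0 ≤ C) (hb : 0 ≤ b) (hε : 0 < ε) (h : b ≤ D * a) (hD : 0 ≤ D) (ha : 0 ≤ a) (m : ℕ) :
    C * b^ε * b^m ≤ (C * D^ε * D^m) * (a^ε * a^m) := by
  calc C * b^ε * b^m ≤ C * (D*a)^ε * (D*a)^m := by gcongr
    _ = _ := by rw [Real.mul_rpow hD ha, mul_pow]; ring

section Stp
variable {E : Type} [NormedAddCommGroup E] [NormedSpace ℂ E] [NormedSpace ℝ E] [IsScalarTower ℝ ℂ E]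

theorem Pn {C : ℝ} (hC : 0 ≤ C) {X Y Z : E} (hY : ‖Y‖ ≤ C * ‖X‖^2) (hZ : ‖Z‖ ≤ C * ‖X‖^3) {l : ℂ} (h : ‖l‖ * ‖X‖ ≤ 1) :
    ‖l • X + l^2 • Y + l^3 • Z‖ ≤ (1 + 2 * C) * (‖l‖ * ‖X‖) := by
  set a := ‖l‖ * ‖X‖ with ha
  have ha0 : 0 ≤ a := by positivity
  have h1 : ‖l • X‖ = a := norm_smul _ _
  have h2 : ‖l^2 • Y‖ ≤ C * a^2 := by
    rw [norm_smul, norm_pow]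
    calc ‖l‖^2 * ‖Y‖ ≤ ‖l‖^2 * (C * ‖X‖^2) := by gcongr
      _ = _ := by rw [ha]; ring
  have h3 : ‖l^3 • Z‖ ≤ C * a^3 := by
    rw [norm_smul, norm_pow]
    calc ‖l‖^3 * ‖Z‖ ≤ ‖l‖^3 * (C * ‖X‖^3) := by gcongr
      _ = _ := by rw [ha]; ring
  have h4 : a^2 ≤ a := by nlinarith
  have h5 : a^3 ≤ a := by
    calc a^3 = a * a^2 := by ring
      _ ≤ a * 1 := by gcongr; nlinarith
      _ = a := mul_one a
  have h6 := mul_le_mul_of_nonneg_left h4 hC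
  have h7 := mul_le_mul_of_nonneg_left h5 hC
  have := norm_add₃_le (a := l • X) (b := l^2 • Y) (c := l^3 • Z)
  linarith

/-- the property of step G -/
def GG (p : E) (d : E → ℝ) (a e R : ℝ) : Prop :=
  ∃ C ≥ 0, ∃ η > 0, ∀ᶠ z in 𝓝 p, ∀ X : E, ∃ Y Z : E, ∀ l : ℂ, ‖l‖ * ‖X‖ ≤ η →
    ‖l • X + l^2 • Y + l^3 • Z‖ < R ∧
    - d z + 2 * (l * NN (fderiv ℝ d z) X).re
      - ‖l‖^2 * Hf (Bt a (fderiv ℝ (fderiv ℝ d) z) (fderiv ℝ d z)) X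
      - C * ((‖l‖ * ‖X‖)^2 * ((‖l‖ * ‖X‖)^2)^e) - C * (‖l‖^3 * ‖X‖^2 * ‖NN (fderiv ℝ d z) X‖)
      ≤ - d (z + (l • X + l^2 • Y + l^3 • Z))

theorem Bt_symm {a : ℝ} {B : E →L[ℝ] E →L[ℝ] ℝ} {A : E →L[ℝ] ℝ} (h : ∀ v w, B v w = B w v) (v w : E) :
    Bt a B A v w = Bt a B A w v := by
  rw [Bt_apply, Bt_apply, h v w]; ring

theorem Bt_ge {a : ℝ} (ha : 0 ≤ a) (B : E →L[ℝ] E →L[ℝ] ℝ) (A : E →L[ℝ] ℝ) (v : E) : B v v ≤ Bt a B A v v := by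
  rw [Bt_diag]; have : 0 ≤ 2 * a * ‖NN A v‖^2 := by positivity
  linarith

theorem SG0 {ε : ℝ} (h0 : 0 < ε) (h1 : ε ≤ 1) {p : E} {d : E → ℝ} (hd : HC ε p 2 ℝ d) {a K R : ℝ} (ha : 0 ≤ a) (hK : 1 ≤ K)
    (hR : 0 < R)
    (H : ∀ᶠ z in 𝓝 p, (∀ v w, fderiv ℝ (fderiv ℝ d) z v w = fderiv ℝ (fderiv ℝ d) z w v) ∧
      ‖Bt a (fderiv ℝ (fderiv ℝ d) z) (fderiv ℝ d z)‖ ≤ K ∧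
      ∃ ν, NN (fderiv ℝ d z) ν = 1 ∧ ‖ν‖ ≤ K) : GG p d a (ε/2) R := by
  obtain ⟨CA, hCA, LA⟩ := lemA (E := E) K (by linarith)
  obtain ⟨CT, hCT, ηT, hηT, LT⟩ := T2 h0 hd
  set D := 1 + 2 * CA with hD
  have hDp : 0 < D := by positivity
  refine ⟨CA + CT * D^ε * D^2, by positivity, min 1 (min ηT R / (2 * D)), by positivity, ?_⟩
  filter_upwards [H, ball_mem_nhds p hηT] with z ⟨z1, z2, ν, z3, z4⟩ zb X
  obtain ⟨Y, hY, HY⟩ := LA (NN (fderiv ℝ d z)) _ ν (Bt_symm z1) z2 z3 z4 X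
  refine ⟨Y, 0, fun l hl => ?_⟩
  have hl1 : ‖l‖ * ‖X‖ ≤ 1 := hl.trans (min_le_left _ _)
  have hP := Pn hCA hY (Z := 0) (by rw [norm_zero]; positivity) hl1
  have HYl := HY l hl1
  have e0 : l • X + l^2 • Y + l^3 • (0:E) = l • X + l^2 • Y := by rw [smul_zero, add_zero]
  rw [e0] at hP ⊢
  set P := l • X + l^2 • Y with hPd
  set s := ‖l‖ * ‖X‖ with hs
  have hs0 : 0 ≤ s := by positivity
  have hPs : ‖P‖ < min ηT R := by
    have : s ≤ min ηT R / (2 * D) := hl.trans (min_le_right _ _)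
    rw [le_div_iff₀ (by positivity)] at this
    have : 0 < min ηT R := by positivity
    linarith
  refine ⟨hPs.trans_le (min_le_right _ _), ?_⟩
  have t := LT z zb P (hPs.trans_le (min_le_left _ _))
  rw [Real.norm_eq_abs] at t
  have t' := (abs_le.1 t).2
  rw [smul_eq_mul] at t'
  have t2 := er hCT (norm_nonneg P) h0 hP hDp.le hs0 2
  have t3 := Bt_ge ha (fderiv ℝ (fderiv ℝ d) z) (fderiv ℝ d z) P
  have t4 := NN_re (fderiv ℝ d z) P
  rw [rp2 hs0]
  have t5 : s^3 ≤ s^2 * s^ε := by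
    have : s ≤ s^ε := by
      calc s = s^(1:ℝ) := (Real.rpow_one s).symm
        _ ≤ s^ε := Real.rpow_le_rpow_of_exponent_ge' hs0 hl1 h0.le h1
    calc s^3 = s^2 * s := by ring
      _ ≤ _ := by gcongr
  have t6 := mul_le_mul_of_nonneg_left t5 hCA
  have t7 : 0 ≤ (CA + CT * D^ε * D^2) * (‖l‖^3 * ‖X‖^2 * ‖NN (fderiv ℝ d z) X‖) := by positivity
  have t8 : (CA + CT * D^ε * D^2) * (s^2 * s^ε) = CA * (s^2 * s^ε) + (CT * D^ε * D^2) * (s^ε * s^2) := by ring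
  have t9 : CT * ‖P‖^ε * ‖P‖ * ‖P‖ = CT * ‖P‖^ε * ‖P‖^2 := by ring
  linarith

theorem SG1 {ε : ℝ} (h0 : 0 < ε) (h1 : ε ≤ 1) {p : E} {d : E → ℝ} (hd : HC ε p 3 ℝ d) {a K c R : ℝ} (ha : 0 ≤ a) (hK : 1 ≤ K)
    (hR : 0 < R) (hc : 0 < c)
    (H : ∀ᶠ z in 𝓝 p, (∀ v w, fderiv ℝ (fderiv ℝ d) z v w = fderiv ℝ (fderiv ℝ d) z w v) ∧
      ‖Bt a (fderiv ℝ (fderiv ℝ d) z) (fderiv ℝ d z)‖ ≤ K ∧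
      (∀ X, c * ‖X‖^2 ≤ Hf (Bt a (fderiv ℝ (fderiv ℝ d) z) (fderiv ℝ d z)) X) ∧
      ∃ ν, NN (fderiv ℝ d z) ν = 1 ∧ ‖ν‖ ≤ K) : GG p d a ((1 + ε)/2) R := by
  obtain ⟨K', hK', HT⟩ := genT h0 hd
  set M := max K K' with hM
  have hM1 : 1 ≤ M := hK.trans (le_max_left _ _)
  have hM0 : 0 ≤ M := by linarith
  obtain ⟨CA, hCA, LA⟩ := lemA (E := E) M hM0
  obtain ⟨CB, hCB, c', hc', LB⟩ := lemB (E := E) M c hM1 hc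
  obtain ⟨CT, hCT, ηT, hηT, LT⟩ := T3 h0 hd
  set C0 := CA + CB with hC0
  have hC0p : 0 ≤ C0 := by positivity
  set D := 1 + 2 * C0 with hD
  have hDp : 0 < D := by positivity
  set C1 := CA + M * D^3 + CT * D^ε * D^3 with hC1
  have hC1p : 0 ≤ C1 := by positivity
  refine ⟨CB + CT * D^ε * D^3 + C1 / c', by positivity, min 1 (min ηT R / (2 * D)), by positivity, ?_⟩
  filter_upwards [H, HT, ball_mem_nhds p hηT] with z ⟨z1, z2, z5, ν, z3, z4⟩ zT zb X
  have z2' := z2.trans (le_max_left K K')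
  have z4' := z4.trans (le_max_left K K')
  have zT' : ∀ X Y Z, |fderiv ℝ (fderiv ℝ (fderiv ℝ d)) z X Y Z| ≤ M * ‖X‖ * ‖Y‖ * ‖Z‖ := by
    intro X Y Z
    refine (zT X Y Z).trans ?_
    have : K' ≤ M := le_max_right _ _
    gcongr
  -- the common part
  have key : ∀ Y Z : E, ‖Y‖ ≤ C0 * ‖X‖^2 → ‖Z‖ ≤ C0 * ‖X‖^3 → ∀ l : ℂ, ‖l‖ * ‖X‖ ≤ min 1 (min ηT R / (2 * D)) →
      ‖l • X + l^2 • Y + l^3 • Z‖ ≤ D * (‖l‖ * ‖X‖) ∧ ‖l • X + l^2 • Y + l^3 • Z‖ < R ∧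
      - d z + (2 * (NN (fderiv ℝ d z) (l • X + l^2 • Y + l^3 • Z)).re
         - (1/2) * Bt a (fderiv ℝ (fderiv ℝ d) z) (fderiv ℝ d z) (l • X + l^2 • Y + l^3 • Z) (l • X + l^2 • Y + l^3 • Z)
         - (1/6) * fderiv ℝ (fderiv ℝ (fderiv ℝ d)) z (l • X + l^2 • Y + l^3 • Z) (l • X + l^2 • Y + l^3 • Z) (l • X + l^2 • Y + l^3 • Z))
         - (CT * D^ε * D^3) * ((‖l‖ * ‖X‖)^ε * (‖l‖ * ‖X‖)^3)
       ≤ - d (z + (l • X + l^2 • Y + l^3 • Z)) := by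
    intro Y Z hY hZ l hl
    have hl1 : ‖l‖ * ‖X‖ ≤ 1 := hl.trans (min_le_left _ _)
    have hP := Pn hC0p hY hZ hl1
    generalize l • X + l^2 • Y + l^3 • Z = P at hP ⊢
    have hPs : ‖P‖ < min ηT R := by
      have : ‖l‖ * ‖X‖ ≤ min ηT R / (2 * D) := hl.trans (min_le_right _ _)
      rw [le_div_iff₀ (by positivity)] at this
      have : 0 < min ηT R := by positivity
      linarith
    refine ⟨hP, hPs.trans_le (min_le_right _ _), ?_⟩
    have t := LT z zb P (hPs.trans_le (min_le_left _ _))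
    rw [Real.norm_eq_abs] at t
    have t' := (abs_le.1 t).2
    rw [smul_eq_mul, smul_eq_mul] at t'
    have t2 := er hCT (norm_nonneg P) h0 hP hDp.le (by positivity) 3
    have t3 := Bt_ge ha (fderiv ℝ (fderiv ℝ d) z) (fderiv ℝ d z) P
    have t4 := NN_re (fderiv ℝ d z) P
    have t9 : CT * ‖P‖^ε * ‖P‖ * ‖P‖ * ‖P‖ = CT * ‖P‖^ε * ‖P‖^3 := by ring
    linarith
  have hrp : ∀ s : ℝ, 0 ≤ s → s^2 * (s^2)^((1+ε)/2) = s^ε * s^3 := by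
    intro s hs
    rw [rp2 hs, Real.rpow_add' hs (by linarith), Real.rpow_one]; ring
  by_cases hcase : ‖NN (fderiv ℝ d z) X‖ ≤ c' * ‖X‖
  · obtain ⟨Y, Z, hY, hZ, HH⟩ := LB (NN (fderiv ℝ d z)) _ _ ν (Bt_symm z1) z2' zT' z3 z4' X (z5 X) hcase
    have hY' : ‖Y‖ ≤ C0 * ‖X‖^2 := hY.trans (by gcongr; linarith)
    have hZ' : ‖Z‖ ≤ C0 * ‖X‖^3 := hZ.trans (by gcongr; linarith)
    refine ⟨Y, Z, fun l hl => ?_⟩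
    obtain ⟨-, k1, k2⟩ := key Y Z hY' hZ' l hl
    refine ⟨k1, le_trans ?_ k2⟩
    have hl1 : ‖l‖ * ‖X‖ ≤ 1 := hl.trans (min_le_left _ _)
    have HHl := HH l hl1
    generalize l • X + l^2 • Y + l^3 • Z = P at HHl ⊢
    rw [hrp _ (by positivity)]
    have t7 : 0 ≤ (CB + CT * D^ε * D^3 + C1 / c') * (‖l‖^3 * ‖X‖^2 * ‖NN (fderiv ℝ d z) X‖) := by positivity
    have hs0 : 0 ≤ ‖l‖ * ‖X‖ := by positivity
    have v1 : (‖l‖ * ‖X‖)^4 ≤ (‖l‖ * ‖X‖)^ε * (‖l‖ * ‖X‖)^3 := by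
      have : ‖l‖ * ‖X‖ ≤ (‖l‖ * ‖X‖)^ε := by
        calc ‖l‖ * ‖X‖ = (‖l‖ * ‖X‖)^(1:ℝ) := (Real.rpow_one _).symm
          _ ≤ (‖l‖ * ‖X‖)^ε := Real.rpow_le_rpow_of_exponent_ge' hs0 hl1 h0.le h1
      calc (‖l‖ * ‖X‖)^4 = (‖l‖ * ‖X‖) * (‖l‖ * ‖X‖)^3 := by ring
        _ ≤ _ := by gcongr
    have v2 := mul_le_mul_of_nonneg_left v1 hCB
    have v3 : 0 ≤ C1 / c' * ((‖l‖ * ‖X‖)^ε * (‖l‖ * ‖X‖)^3) := by positivity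
    have v4 : (CB + CT * D^ε * D^3 + C1 / c') * ((‖l‖ * ‖X‖)^ε * (‖l‖ * ‖X‖)^3) =
      CB * ((‖l‖ * ‖X‖)^ε * (‖l‖ * ‖X‖)^3) + (CT * D^ε * D^3) * ((‖l‖ * ‖X‖)^ε * (‖l‖ * ‖X‖)^3)
       + C1 / c' * ((‖l‖ * ‖X‖)^ε * (‖l‖ * ‖X‖)^3) := by ring
    linarith
  · obtain ⟨Y, hY, HH⟩ := LA (NN (fderiv ℝ d z)) _ ν (Bt_symm z1) z2' z3 z4' X
    have hY' : ‖Y‖ ≤ C0 * ‖X‖^2 := hY.trans (by gcongr; linarith)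
    refine ⟨Y, 0, fun l hl => ?_⟩
    obtain ⟨hP, k1, k2⟩ := key Y 0 hY' (by rw [norm_zero]; positivity) l hl
    refine ⟨k1, le_trans ?_ k2⟩
    have hl1 : ‖l‖ * ‖X‖ ≤ 1 := hl.trans (min_le_left _ _)
    have HHl := HH l hl1
    have e0 : l • X + l^2 • Y + l^3 • (0:E) = l • X + l^2 • Y := by rw [smul_zero, add_zero]
    rw [e0] at hP ⊢
    generalize l • X + l^2 • Y = P at HHl hP ⊢
    rw [hrp _ (by positivity)]
    have hT := (abs_le.1 (zT' P P P)).2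
    have hs0 : 0 ≤ ‖l‖ * ‖X‖ := by positivity
    have w1 : M * ‖P‖ * ‖P‖ * ‖P‖ ≤ M * D^3 * (‖l‖ * ‖X‖)^3 := by
      calc M * ‖P‖ * ‖P‖ * ‖P‖ = M * ‖P‖^3 := by ring
        _ ≤ M * (D * (‖l‖ * ‖X‖))^3 := by gcongr
        _ = _ := by ring
    have w2 : C1 * (‖l‖ * ‖X‖)^3 ≤ C1 / c' * (‖l‖^3 * ‖X‖^2 * ‖NN (fderiv ℝ d z) X‖) := by
      have : c' * ‖X‖ ≤ ‖NN (fderiv ℝ d z) X‖ := (not_le.1 hcase).le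
      calc C1 * (‖l‖ * ‖X‖)^3 = C1 / c' * (‖l‖^3 * ‖X‖^2 * (c' * ‖X‖)) := by field_simp
        _ ≤ _ := by gcongr
    have w3 : (‖l‖ * ‖X‖)^ε ≤ 1 := Real.rpow_le_one hs0 hl1 h0.le
    have w4 : 0 ≤ (CB + CT * D^ε * D^3) * (‖l‖^3 * ‖X‖^2 * ‖NN (fderiv ℝ d z) X‖) := by positivity
    have w5 : 0 ≤ (CB + CT * D^ε * D^3 + C1 / c') * ((‖l‖ * ‖X‖)^ε * (‖l‖ * ‖X‖)^3) := by positivity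
    have w6 : (CT * D^ε * D^3) * ((‖l‖ * ‖X‖)^ε * (‖l‖ * ‖X‖)^3) ≤ (CT * D^ε * D^3) * (1 * (‖l‖ * ‖X‖)^3) := by gcongr
    have w7 : 0 ≤ M * D^3 * (‖l‖ * ‖X‖)^3 := by positivity
    have w8 : C1 * (‖l‖ * ‖X‖)^3 = CA * (‖l‖ * ‖X‖)^3 + M * D^3 * (‖l‖ * ‖X‖)^3 + (CT * D^ε * D^3) * (1 * (‖l‖ * ‖X‖)^3) := by
      rw [hC1]; ring
    have w9 : (CB + CT * D^ε * D^3 + C1 / c') * (‖l‖^3 * ‖X‖^2 * ‖NN (fderiv ℝ d z) X‖) = 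
       (CB + CT * D^ε * D^3) * (‖l‖^3 * ‖X‖^2 * ‖NN (fderiv ℝ d z) X‖) + C1 / c' * (‖l‖^3 * ‖X‖^2 * ‖NN (fderiv ℝ d z) X‖) := by ring
    linarith
end Stp

theorem kob_bdd (Ω : Set (Cn n)) (z X : Cn n) : BddBelow {r : ℝ | ∃ (α : ℂ) (φ : ℂ → Cn n),
    DifferentiableOn ℂ φ (Metric.ball 0 1) ∧ Set.MapsTo φ (Metric.ball 0 1) Ω ∧
    φ 0 = z ∧ α • deriv φ 0 = X ∧ r = ‖α‖} :=
  ⟨0, by rintro r ⟨α, φ, -, -, -, -, rfl⟩; exact norm_nonneg _⟩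

theorem kob0 {Ω : Set (Cn n)} {z : Cn n} (hz : z ∈ Ω) : kobayashi Ω z 0 ≤ 0 :=
  csInf_le (kob_bdd Ω z 0) ⟨0, fun _ => z, by fun_prop, fun _ _ => hz, rfl, by simp, by simp⟩

theorem kob1 {Ω : Set (Cn n)} {z X Y Z : Cn n} {u : ℂ} {r s : ℝ} (hr : 0 < r) (hs : 0 < s)
    (h : ∀ ξ : ℂ, ‖ξ‖ ≤ r → 1 - u * ξ ≠ 0 ∧
      z + ((ξ / (1 - u * ξ)) • X + (ξ / (1 - u * ξ))^2 • Y + (ξ / (1 - u * ξ))^3 • Z) ∈ Ω) :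
    kobayashi Ω z ((s : ℂ) • X) ≤ s / r := by
  have hb : ∀ ζ ∈ ball (0:ℂ) 1, ‖(r:ℂ) * ζ‖ ≤ r := by
    intro ζ hζ
    rw [mem_ball_zero_iff] at hζ
    rw [norm_mul, Complex.norm_real, Real.norm_eq_abs, abs_of_pos hr]
    nlinarith
  set lam : ℂ → ℂ := fun ζ => ((r:ℂ) * ζ) / (1 - u * ((r:ℂ) * ζ)) with hlam
  have hlamd : ∀ ζ ∈ ball (0:ℂ) 1, DifferentiableAt ℂ lam ζ := by
    intro ζ hζ
    have := (h _ (hb ζ hζ)).1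
    exact DifferentiableAt.div (by fun_prop) (by fun_prop) this
  have hl0 : lam 0 = 0 := by simp [hlam]
  have hl1 : HasDerivAt lam r 0 := by
    have a1 : HasDerivAt (fun ζ : ℂ => (r:ℂ) * ζ) r 0 := by
      simpa using (hasDerivAt_id (0:ℂ)).const_mul (r:ℂ)
    have a2 : HasDerivAt (fun ζ : ℂ => 1 - u * ((r:ℂ) * ζ)) (-(u * r)) 0 := (a1.const_mul u).const_sub 1
    have := a1.div a2 (by simp)
    exact this.congr_deriv (by simp)
  set φ : ℂ → Cn n := fun ζ => z + (lam ζ • X + (lam ζ)^2 • Y + (lam ζ)^3 • Z) with hφ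
  have hφ1 : HasDerivAt φ ((r:ℂ) • X) 0 := by
    have b2 := (hl1.pow 2).smul_const Y
    have b3 := (hl1.pow 3).smul_const Z
    have := ((hl1.smul_const X).fun_add b2 |>.fun_add b3).const_add z
    exact this.congr_deriv (by simp [hl0])
  have hrc : (r : ℂ) ≠ 0 := by exact_mod_cast hr.ne'
  apply csInf_le (kob_bdd Ω z _)
  refine ⟨((s / r : ℝ) : ℂ), φ, ?_, ?_, ?_, ?_, ?_⟩
  · intro ζ hζ
    have := hlamd ζ hζ
    apply DifferentiableAt.differentiableWithinAt
    simp only [hφ]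
    fun_prop
  · intro ζ hζ
    exact (h _ (hb ζ hζ)).2
  · simp [hφ, hl0]
  · rw [hφ1.deriv, smul_smul]
    congr 1
    push_cast
    field_simp
  · rw [Complex.norm_real, Real.norm_eq_abs, abs_of_pos (by positivity)]

theorem sc {N2 L δ a : ℝ} (hN : 0 ≤ N2) (hδ : 0 < δ) (ha : 0 ≤ a) (haδ : a * δ ≤ 1/2) (hL : 0 ≤ L + a * N2) :
    Real.sqrt (N2 / δ^2 + (L + a * N2) / δ) ≤ (1 + 2 * (a * δ)) * Real.sqrt (N2 / δ^2 + L / δ) := by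
  set x := N2 / δ^2 with hx
  have hx0 : 0 ≤ x := by positivity
  have e1 : a * N2 / δ = a * δ * x := by rw [hx]; field_simp
  have had : 0 ≤ a * δ := by positivity
  have e2 : - (a * δ * x) ≤ L / δ := by
    have : 0 ≤ (L + a * N2) / δ := by positivity
    rw [add_div, e1] at this; linarith
  have e3 : a * δ * x ≤ 1/2 * x := by gcongr
  have e4 : x ≤ 2 * (x + L / δ) := by linarith
  rw [add_div, e1]
  have hy : 0 ≤ x + L / δ := by linarith
  have key : x + (L / δ + a * δ * x) ≤ (1 + 2 * (a * δ))^2 * (x + L / δ) := by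
    have k1 : a * δ * x ≤ a * δ * (2 * (x + L / δ)) := by gcongr
    have k2 : 0 ≤ (a * δ) * (x + L/δ) := by positivity
    have k3 : 0 ≤ (a * δ) * ((a * δ) * (x + L/δ)) := by positivity
    have k4 : (1 + 2 * (a * δ))^2 * (x + L / δ) = (x + L/δ) + 4 * ((a * δ) * (x + L/δ)) + 4 * ((a * δ) * ((a * δ) * (x + L/δ))) := by ring
    linarith
  rw [← Real.sqrt_sq (show 0 ≤ 1 + 2 * (a * δ) by positivity), ← Real.sqrt_mul (by positivity)]
  exact Real.sqrt_le_sqrt key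

theorem cd_eq {Ω : Set (Cn n)} {d : Cn n → ℝ} {z : Cn n} (h : bdist Ω =ᶠ[𝓝 z] fun x => - d x) (X : Cn n) :
    cderiv (bdist Ω) z X = NN (fderiv ℝ d z) X := by
  have e : fderiv ℝ (bdist Ω) z = - fderiv ℝ d z := by
    rw [h.fderiv_eq, fderiv_fun_neg]
  rw [cderiv, e, NN_apply]
  simp only [neg_apply, Complex.ofReal_neg]
  ring

theorem lf_eq {Ω : Set (Cn n)} {d : Cn n → ℝ} {z : Cn n} (h : bdist Ω =ᶠ[𝓝 z] fun x => - d x)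
    (hd : DifferentiableAt ℝ (fderiv ℝ d) z) (X : Cn n) :
    leviForm (fun w => -(bdist Ω w)) z X = Hf (fderiv ℝ (fderiv ℝ d) z) X := by
  have h1 : (fun w => -(bdist Ω w)) =ᶠ[𝓝 z] d := by
    filter_upwards [h] with w hw
    rw [hw, neg_neg]
  have h2 : ∀ v, fderiv ℝ (fun w => fderiv ℝ (fun w => -(bdist Ω w)) w v) z v = fderiv ℝ (fderiv ℝ d) z v v := by
    intro v
    have : (fun w => fderiv ℝ (fun w => -(bdist Ω w)) w v) =ᶠ[𝓝 z] fun w => fderiv ℝ d w v := by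
      filter_upwards [h1.eventuallyEq_nhds] with w hw
      rw [hw.fderiv_eq]
    rw [this.fderiv_eq, fderiv_clm_apply hd (by fun_prop)]
    simp
  rw [leviForm, h2, h2, Hf]

theorem lf_eq' {ρ : Cn n → ℝ} {z : Cn n}
    (hd : DifferentiableAt ℝ (fderiv ℝ ρ) z) (X : Cn n) :
    leviForm ρ z X = Hf (fderiv ℝ (fderiv ℝ ρ) z) X := by
  have h2 : ∀ v, fderiv ℝ (fun w => fderiv ℝ ρ w v) z v = fderiv ℝ (fderiv ℝ ρ) z v v := by
    intro v
    rw [fderiv_clm_apply hd (by fun_prop)]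
    simp
  rw [leviForm, h2, h2, Hf]

theorem last {Ω : Set (Cn n)} (hΩ : IsOpen Ω) {p : Cn n} (hp : p ∈ frontier Ω) {d : Cn n → ℝ} {a c e : ℝ}
    (ha : 0 ≤ a) (hc : 0 < c) (hc1 : c ≤ 1) (he0 : 0 < e) (he1 : e ≤ 1) {V : Set (Cn n)} (hV : V ∈ 𝓝 p)
    (hV1 : ∀ x ∈ V, d x < 0 → x ∈ Ω) (hV2 : ∀ x ∈ Ω ∩ V, infDist x (frontier Ω) = - d x)
    (hdd : ∀ᶠ z in 𝓝 p, DifferentiableAt ℝ (fderiv ℝ d) z)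
    (hH : ∀ᶠ z in 𝓝 p, ∀ X, c * ‖X‖^2 ≤ Hf (Bt a (fderiv ℝ (fderiv ℝ d) z) (fderiv ℝ d z)) X)
    (hG : ∀ R > 0, GG p d a e R) :
    ∃ (C : ℝ) (U : Set (Cn n)), 0 < C ∧ IsOpen U ∧ p ∈ U ∧
      ∀ z ∈ Ω ∩ U, ∀ X : Cn n,
        kobayashi Ω z X ≤ (1 + C * bdist Ω z ^ e) * Mfun Ω z X := by
  obtain ⟨R, hR, hRV⟩ := Metric.mem_nhds_iff.1 hV
  obtain ⟨C, hC, η, hη, hz⟩ := hG (R/2) (by positivity)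
  obtain ⟨K, hK, HF⟩ := FIN e c C η he0 he1 hc hc1 hC hη
  have hcont : ContinuousAt (bdist Ω) p := (continuous_infDist_pt _).continuousAt
  have hbp : bdist Ω p = 0 := infDist_zero_of_mem hp
  have q1 : ∀ᶠ z in 𝓝 p, bdist Ω z < 1 := hcont.eventually_lt continuousAt_const (by rw [hbp]; norm_num)
  have q2 : ∀ᶠ z in 𝓝 p, a * bdist Ω z < 1/2 :=
    (continuousAt_const.mul hcont).eventually_lt continuousAt_const (by simp [hbp])
  have q3 : ∀ᶠ z in 𝓝 p, K * bdist Ω z ^ e < 1/2 :=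
    (continuousAt_const.mul (hcont.rpow_const (Or.inr he0.le))).eventually_lt continuousAt_const
      (by simp [hbp, Real.zero_rpow he0.ne'])
  have q4 : ∀ᶠ z in 𝓝 p, z ∈ ball p (R/2) := ball_mem_nhds p (by positivity)
  obtain ⟨U, hU, hUo, hpU⟩ := _root_.eventually_nhds_iff.1 (hz.and (q1.and (q2.and (q3.and (q4.and (hdd.and hH))))))
  refine ⟨2 * K + 4 * a, U, by positivity, hUo, hpU, ?_⟩
  rintro z ⟨hzΩ, hzU⟩ X
  obtain ⟨z0, z1, z2, z3, z4, z5, z6⟩ := hU z hzU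
  have hzV : z ∈ V := hRV (ball_subset_ball (by linarith) z4)
  have hδd : bdist Ω z = - d z := hV2 z ⟨hzΩ, hzV⟩
  have hδ : 0 < bdist Ω z := by
    refine (isClosed_frontier.notMem_iff_infDist_pos ⟨p, hp⟩).1 ?_
    rw [hΩ.frontier_eq]
    exact fun h => h.2 hzΩ
  have hev : bdist Ω =ᶠ[𝓝 z] fun x => - d x := by
    filter_upwards [hΩ.mem_nhds hzΩ, isOpen_ball.mem_nhds (ball_subset_ball (by linarith) z4 : z ∈ ball p R)] with x h1 h2
    exact hV2 x ⟨h1, hRV h2⟩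
  rw [Mfun, cd_eq hev, lf_eq hev z5]
  by_cases hX : X = 0
  · subst hX
    exact (kob0 hzΩ).trans (by positivity)
  set δ := bdist Ω z with hδe
  set N := NN (fderiv ℝ d z) with hN
  set B := fderiv ℝ (fderiv ℝ d) z with hB
  have hH1 := z6 X
  rw [Bt_Hf] at hH1
  have hXp : 0 < c * ‖X‖^2 := by positivity
  have hHp : 0 < Hf B X + a * ‖N X‖^2 := lt_of_lt_of_le hXp hH1
  set s := Real.sqrt (‖N X‖^2 / δ^2 + (Hf B X + a * ‖N X‖^2) / δ) with hs
  have hs2 : s^2 = ‖N X‖^2 / δ^2 + (Hf B X + a * ‖N X‖^2) / δ := Real.sq_sqrt (by positivity)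
  have hsp : 0 < s := Real.sqrt_pos.2 (by positivity)
  have hss : s ≤ (1 + 2 * (a * δ)) * Real.sqrt (‖N X‖^2 / δ^2 + Hf B X / δ) :=
    sc (by positivity) hδ ha z2.le hHp.le
  have hde : 0 < δ^e := by positivity
  set t := K * δ^e with ht
  have htp : 0 < t := by positivity
  -- normalised vector
  obtain ⟨X', hX'⟩ : ∃ X' : Cn n, X' = s⁻¹ • X := ⟨_, rfl⟩
  have hX'c : X' = ((s⁻¹ : ℝ) : ℂ) • X := by rw [hX']; rfl
  have hsX : (s : ℂ) • X' = X := by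
    rw [hX'c, smul_smul, ← Complex.ofReal_mul, mul_inv_cancel₀ hsp.ne', Complex.ofReal_one, one_smul]
  have hNX' : ‖N X'‖^2 = s⁻¹^2 * ‖N X‖^2 := by
    rw [hX'c, map_smul, norm_smul, Complex.norm_real, Real.norm_eq_abs, abs_of_pos (by positivity)]; ring
  have hHX' : Hf (Bt a B (fderiv ℝ d z)) X' = s⁻¹^2 * (Hf B X + a * ‖N X‖^2) := by
    rw [hX', Hf_smul, Bt_Hf]
  have hnorm : ‖N X'‖^2 / δ^2 + Hf (Bt a B (fderiv ℝ d z)) X' / δ = 1 := by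
    rw [hNX', hHX']
    calc _ = s⁻¹^2 * (‖N X‖^2 / δ^2 + (Hf B X + a * ‖N X‖^2) / δ) := by ring
      _ = 1 := by rw [← hs2]; field_simp
  obtain ⟨Y, Z, hYZ⟩ := z0 X'
  have hk := kob1 (Ω := Ω) (z := z) (X := X') (Y := Y) (Z := Z) (u := N X' / δ) (r := 1 - t) (s := s) (by linarith) hsp (by
    intro ξ hξ
    obtain ⟨f1, f2, f3⟩ := HF δ hδ z1.le ‖X'‖ _ (N X') ξ (norm_nonneg _) (z6 X') hnorm hξ
    refine ⟨f1, ?_⟩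
    obtain ⟨g1, g2⟩ := hYZ _ f2
    rw [← hδd] at g2
    have g3 := f3.trans_le g2
    refine hV1 _ (hRV ?_) (by linarith)
    rw [mem_ball, dist_eq_norm] at z4 ⊢
    rw [add_sub_right_comm]
    refine (norm_add_le _ _).trans_lt ?_
    linarith)
  rw [hsX] at hk
  refine hk.trans ?_
  have hM0 := Real.sqrt_nonneg (‖N X‖^2 / δ^2 + Hf B X / δ)
  set M := Real.sqrt (‖N X‖^2 / δ^2 + Hf B X / δ) with hM
  have hdle : δ ≤ δ^e := by
    calc δ = δ^(1:ℝ) := (Real.rpow_one _).symm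
      _ ≤ δ^e := Real.rpow_le_rpow_of_exponent_ge' hδ.le z1.le he0.le he1
  have m1 : s / (1 - t) ≤ (1 + 2 * t) * s := by
    rw [div_le_iff₀ (by linarith)]
    have : 1 ≤ (1 + 2 * t) * (1 - t) := by nlinarith
    calc s = 1 * s := (one_mul s).symm
      _ ≤ ((1 + 2 * t) * (1 - t)) * s := by gcongr
      _ = _ := by ring
  have m2 : (1 + 2 * t) * (1 + 2 * (a * δ)) ≤ 1 + (2 * K + 4 * a) * δ^e := by
    have n1 : a * δ ≤ a * δ^e := by gcongr
    have n2 : t * (a * δ) ≤ 1/2 * (a * δ) := by gcongr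
    have n3 : (1 + 2 * t) * (1 + 2 * (a * δ)) = 1 + 2 * t + 2 * (a * δ) + 4 * (t * (a * δ)) := by ring
    have n4 : (2 * K + 4 * a) * δ^e = 2 * t + 4 * (a * δ^e) := by rw [ht]; ring
    linarith
  calc s / (1 - t) ≤ (1 + 2 * t) * s := m1
    _ ≤ (1 + 2 * t) * ((1 + 2 * (a * δ)) * M) := by gcongr
    _ = ((1 + 2 * t) * (1 + 2 * (a * δ))) * M := by ring
    _ ≤ _ := by gcongr

theorem fin_main (n : ℕ) (ε : ℝ) (hε : ε ∈ Set.Ioc (0 : ℝ) 1) (k : ℕ) (hk : k = 0 ∨ k = 1)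
    (Ω : Set (Cn n)) (hopen : IsOpen Ω) (p : Cn n) (hp : IsStrictPscPtHolder Ω p (k + 2) ε) :
    ∃ (C : ℝ) (U : Set (Cn n)), 0 < C ∧ IsOpen U ∧ p ∈ U ∧
      ∀ z ∈ Ω ∩ U, ∀ X : Cn n,
        kobayashi Ω z X ≤ (1 + C * bdist Ω z ^ (((k : ℝ) + ε) / 2)) * Mfun Ω z X := by
  obtain ⟨h0, h1⟩ := hε
  obtain ⟨hpf, W, hW, hpW, ρ, hρ, ⟨C, hhol⟩, hΩW, hgr, hlev⟩ := hp
  have hHC : HC ε p (k+2) ℝ ρ := HC.of_iteratedFDeriv h0 hW hpW hρ hhol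
  obtain ⟨d, hd, ⟨c, hc, hdc, hdc2⟩, V, hV, hV1, hV2⟩ := SD h0 h1 hopen hpf hW hpW hHC hρ.continuousOn hΩW (hgr p ⟨hpf, hpW⟩)
  have hd2 : HC ε p 2 ℝ d := by
    rcases hk with rfl | rfl
    · exact hd
    · exact HC.pred h0 h1 hd
  have hρ2 : HC ε p 2 ℝ ρ := by
    rcases hk with rfl | rfl
    · exact hHC
    · exact HC.pred h0 h1 hHC
  have hne : fderiv ℝ d p ≠ 0 := by
    rw [hdc]
    exact smul_ne_zero hc.ne' (hgr p ⟨hpf, hpW⟩)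
  have hpos : ∀ X : Cn n, X ≠ 0 → NN (fderiv ℝ d p) X = 0 → 0 < Hf (fderiv ℝ (fderiv ℝ d) p) X := by
    intro X hX hN
    have e1 := NN_sq (fderiv ℝ d p) X
    rw [hN, norm_zero, hdc] at e1
    simp only [smul_apply, smul_eq_mul] at e1
    have e2 : (c * fderiv ℝ ρ p X)^2 = 0 := by nlinarith [sq_nonneg (c * fderiv ℝ ρ p X), sq_nonneg (c * fderiv ℝ ρ p (Complex.I • X))]
    have e3 : (c * fderiv ℝ ρ p (Complex.I • X))^2 = 0 := by nlinarith [sq_nonneg (c * fderiv ℝ ρ p X), sq_nonneg (c * fderiv ℝ ρ p (Complex.I • X))]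
    have e4 : fderiv ℝ ρ p X = 0 := by
      have := pow_eq_zero_iff (two_ne_zero) |>.1 e2
      exact (mul_eq_zero.1 this).resolve_left hc.ne'
    have e5 : fderiv ℝ ρ p (Complex.I • X) = 0 := by
      have := pow_eq_zero_iff (two_ne_zero) |>.1 e3
      exact (mul_eq_zero.1 this).resolve_left hc.ne'
    have e6 := hlev p ⟨hpf, hpW⟩ X hX (by rw [cderiv, e4, e5]; simp)
    rw [lf_eq' hρ2.2.1.self_of_nhds] at e6
    have e7 : Hf (fderiv ℝ (fderiv ℝ d) p) X = c * Hf (fderiv ℝ (fderiv ℝ ρ) p) X := by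
      rw [Hf, Hf, hdc2 _ e4, hdc2 _ e5]; ring
    rw [e7]; positivity
  obtain ⟨a, ha, c0, hc0, hc01, K, hK, HD⟩ := DAT h0 hd2 hne hpos
  refine last hopen hpf ha hc0 hc01 ?_ ?_ hV hV1 hV2 hd2.2.1 (HD.mono fun z hz => hz.2.2.1) ?_
  · positivity
  · rcases hk with rfl | rfl <;> push_cast <;> linarith
  · intro R hR
    rcases hk with rfl | rfl
    · rw [Nat.cast_zero, zero_add]
      exact SG0 h0 h1 hd ha hK hR (HD.mono fun z hz => ⟨hz.1, hz.2.1, hz.2.2.2⟩)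
    · rw [Nat.cast_one]
      exact SG1 h0 h1 hd ha hK hR hc0 HD

end MyPart

/-- Under assumption (∗), the Kobayashi metric satisfies the upper estimate
`κ_Ω(z;X) ≤ (1 + C·δ_Ω(z)^ε_k)·M(z;X)` near `p`. -/
theorem kobayashi_upper_estimate (n : ℕ) (ε : ℝ) (hε : ε ∈ Set.Ioc (0 : ℝ) 1) (k : ℕ) (hk : k = 0 ∨ k = 1)
    (Ω : Set (Cn n)) (hopen : IsOpen Ω) (hconn : IsConnected Ω) (p : Cn n) (hp : IsStrictPscPtHolder Ω p (k + 2) ε) :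
    ∃ (C : ℝ) (U : Set (Cn n)), 0 < C ∧ IsOpen U ∧ p ∈ U ∧
      ∀ z ∈ Ω ∩ U, ∀ X : Cn n,
        kobayashi Ω z X ≤ (1 + C * bdist Ω z ^ (((k : ℝ) + ε) / 2)) * Mfun Ω z X := by
  exact fin_main n ε hε k hk Ω hopen p hp

end
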